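/- Let N,k ≥ 1 be integers, 0 ≤ γ < 1, p > 1, T > 0, and ε = 1/(2(N+2)+k). Let Θ(z) = c·exp(−ε√(1 + |x|⁴ + |y|²)) with c > 0 chosen so that ∫_{ℝ^{N+k}} Θ(z) dz = 1. Suppose u ∈ C([0,T], C₀(ℝ^{N+k})), u ≥ 0, is a weak solution on ℝ^{N+k} × [0,T] of u_t − Δ_G u = ∫_0^t (t−s)^{−γ}|u(s)|^{p−1}u(s) ds with nonnegative initial datum u0 ∈ C₀(ℝ^{N+k}). Then the function f(t) = ∫_{ℝ^{N+k}} u(z,t)Θ(z) dz belongs to C¹([0,T]) and satisfies f'(t) + f(t) ≥ ∫_0^t (t−s)^{−γ} f(s)^p ds for all t ∈ [0,T]. -/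

import Mathlib

open MeasureTheory Real Filter
open scoped ENNReal NNReal

noncomputable section

abbrev Euc (n : ℕ) : Type := EuclideanSpace ℝ (Fin n)

/-- Second derivative of `f` at `z`, taken twice in the direction `v`. -/
def secondDeriv {N k : ℕ} (f : Euc N × Euc k → ℝ) (z v : Euc N × Euc k) : ℝ :=
  fderiv ℝ (fun w => fderiv ℝ f w v) z v

/-- The Laplacian in the `x`-variables. -/
def laplacianX {N k : ℕ} (f : Euc N × Euc k → ℝ) (z : Euc N × Euc k) : ℝ :=
  ∑ i : Fin N, secondDeriv f z (EuclideanSpace.single i 1, 0)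

/-- The Laplacian in the `y`-variables. -/
def laplacianY {N k : ℕ} (f : Euc N × Euc k → ℝ) (z : Euc N × Euc k) : ℝ :=
  ∑ j : Fin k, secondDeriv f z (0, EuclideanSpace.single j 1)

/-- The Grushin operator `Δ_G = Δ_x + |x|² Δ_y`. -/
def grushin {N k : ℕ} (f : Euc N × Euc k → ℝ) (z : Euc N × Euc k) : ℝ :=
  laplacianX f z + ‖z.1‖ ^ 2 * laplacianY f z

/-- The power nonlinearity `|v|^(p-1) · v`. -/
def absPow (p v : ℝ) : ℝ := |v| ^ (p - 1) * v

/-- The Riemann–Liouville fractional integral `I^α_{0|t} f`. -/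
def fracInt (α : ℝ) (f : ℝ → ℝ) (t : ℝ) : ℝ :=
  (1 / Real.Gamma α) * ∫ s in Set.Ioc (0 : ℝ) t, (t - s) ^ (α - 1) * f s


/-- Weak solution on `ℝ^{N+k} × [0,T]` of
`u_t − Δ_G u = ∫_0^t (t−s)^{−γ}|u(s)|^{p−1}u(s) ds`, `u(·,0) = u0` (with `α = 1 − γ`). -/
def IsWeakSolutionMemory (N k : ℕ) (γ p T : ℝ) (u0 : Euc N × Euc k → ℝ)
    (u : Euc N × Euc k → ℝ → ℝ) : Prop :=
  LocallyIntegrableOn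
      (fun q : (Euc N × Euc k) × ℝ => fracInt (1 - γ) (fun s => absPow p (u q.1 s)) q.2)
      (Set.univ ×ˢ Set.Ioo 0 T) volume ∧
  ∀ φ : Euc N × Euc k → ℝ → ℝ,
    ContDiff ℝ 2 (fun q : (Euc N × Euc k) × ℝ => φ q.1 q.2) →
    HasCompactSupport (fun q : (Euc N × Euc k) × ℝ => φ q.1 q.2) →
    (∀ z, φ z T = 0) →
    ((∫ z, u z T * φ z T) - ∫ z, u0 z * φ z 0) =
      Real.Gamma (1 - γ) *
        (∫ t in Set.Ioc (0 : ℝ) T, ∫ z,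
          fracInt (1 - γ) (fun s => absPow p (u z s)) t * φ z t) +
      (∫ t in Set.Ioc (0 : ℝ) T, ∫ z, u z t * grushin (fun w => φ w t) z) +
      (∫ t in Set.Ioc (0 : ℝ) T, ∫ z, u z t * deriv (φ z) t)

/-- The weight `Θ(z) = c · exp(−ε √(1 + |x|⁴ + |y|²))` with `ε = 1/(2(N+2)+k)`. -/
def Theta (N k : ℕ) (c : ℝ) (z : Euc N × Euc k) : ℝ :=
  c * Real.exp (-(1 / (2 * ((N : ℝ) + 2) + k)) * Real.sqrt (1 + ‖z.1‖ ^ 4 + ‖z.2‖ ^ 2))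

/-!
Testing the equation against `w(z) ψ(t)` gives, for compactly supported `w`, the weak form of
`d/dt ∫ u w = ∫₀ᵗ (t - s)^(-γ) (∫ u(s)ᵖ w) ds + ∫ u Δ_G w`, whose right-hand side is continuous in
`t`; by the lemma of du Bois-Reymond it holds classically. Writing `ρ = √(1 + |x|⁴ + |y|²)`,
dominated convergence along the truncations `Θ χ(ρ / n)` extends the identity to `w = Θ`: both these
weights and their images under `Δ_G` are bounded by a multiple of `ρ e^(-ερ)`, because `|∇_G ρ|²`
and `Δ_G ρ` are `O(ρ)`. Finally `Δ_G ρ ≤ 2(N + 2) + k = 1 / ε` makes `Δ_G Θ ≥ -Θ`, and Jensen's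
inequality for the probability density `Θ` bounds `∫ u(s)ᵖ Θ` below by `(∫ u(s) Θ)ᵖ`.
-/

section GrushinCalculus

variable {N k : ℕ} {F : Euc N × Euc k → ℝ} {g : ℝ → ℝ}

/-- The squared length `|∇_x F|² + |x|² |∇_y F|²` of the Grushin gradient: the coefficient of the
second derivative of `g` in `Δ_G (g ∘ F)`. -/
def grushinGradSq (F : Euc N × Euc k → ℝ) (z : Euc N × Euc k) : ℝ :=
  ∑ i : Fin N, fderiv ℝ F z (EuclideanSpace.single i 1, 0) ^ 2 +
    ‖z.1‖ ^ 2 * ∑ j : Fin k, fderiv ℝ F z (0, EuclideanSpace.single j 1) ^ 2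

lemma grushinGradSq_nonneg (F : Euc N × Euc k → ℝ) (z : Euc N × Euc k) :
    0 ≤ grushinGradSq F z := by
  unfold grushinGradSq
  positivity

lemma fderiv_comp_real {E : Type*} [NormedAddCommGroup E] [NormedSpace ℝ E] {F : E → ℝ}
    (hg : Differentiable ℝ g) (hF : Differentiable ℝ F) (z v : E) :
    fderiv ℝ (fun w => g (F w)) z v = deriv g (F z) * fderiv ℝ F z v :=
  DFunLike.congr_fun ((hg (F z)).hasDerivAt.comp_hasFDerivAt z (hF z).hasFDerivAt).fderiv v

lemma secondDeriv_comp (hg : ContDiff ℝ 2 g) (hF : ContDiff ℝ 2 F) (z v : Euc N × Euc k) :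
    secondDeriv (fun w => g (F w)) z v =
      deriv (deriv g) (F z) * fderiv ℝ F z v ^ 2 + deriv g (F z) * secondDeriv F z v := by
  have hF₁ : Differentiable ℝ F := hF.differentiable two_ne_zero
  have hg₂ : Differentiable ℝ (deriv g) :=
    (contDiff_succ_iff_deriv.1 hg).2.2.differentiable one_ne_zero
  have hF₂ : Differentiable ℝ fun w => fderiv ℝ F w v :=
    ((hF.fderiv_right (m := 1) le_rfl).clm_apply contDiff_const).differentiable one_ne_zero
  unfold secondDeriv
  simp_rw [fderiv_comp_real (hg.differentiable two_ne_zero) hF₁]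
  have product_rule := ((hg₂ (F z)).hasDerivAt.comp_hasFDerivAt z (hF₁ z).hasFDerivAt).mul
    (hF₂ z).hasFDerivAt
  refine (DFunLike.congr_fun product_rule.fderiv v).trans ?_
  simp only [Function.comp_apply, add_apply, smul_apply, smul_eq_mul]
  ring

lemma grushin_comp (hg : ContDiff ℝ 2 g) (hF : ContDiff ℝ 2 F) (z : Euc N × Euc k) :
    grushin (fun w => g (F w)) z =
      deriv (deriv g) (F z) * grushinGradSq F z + deriv g (F z) * grushin F z := by
  simp only [grushin, laplacianX, laplacianY, grushinGradSq, secondDeriv_comp hg hF,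
    Finset.sum_add_distrib, ← Finset.mul_sum]
  ring

lemma grushin_mul_const (hF : ContDiff ℝ 2 F) (a : ℝ) (z : Euc N × Euc k) :
    grushin (fun w => F w * a) z = grushin F z * a := by
  have hderiv : deriv (fun r : ℝ => r * a) = fun _ => a := by
    funext r
    simp
  rw [grushin_comp (g := fun r => r * a) (by fun_prop) hF, hderiv, deriv_const]
  ring

lemma continuous_secondDeriv (hF : ContDiff ℝ 2 F) (v : Euc N × Euc k) :
    Continuous fun z => secondDeriv F z v := by
  have hF₁ : ContDiff ℝ 1 fun w => fderiv ℝ F w v :=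
    (hF.fderiv_right (m := 1) le_rfl).clm_apply contDiff_const
  exact (hF₁.continuous_fderiv one_ne_zero).clm_apply continuous_const

lemma continuous_grushin (hF : ContDiff ℝ 2 F) : Continuous (grushin F) := by
  have hcont := continuous_secondDeriv hF
  unfold grushin laplacianX laplacianY
  fun_prop

lemma support_secondDeriv_subset (F : Euc N × Euc k → ℝ) (v : Euc N × Euc k) :
    Function.support (fun z => secondDeriv F z v) ⊆ tsupport F := by
  refine (subset_tsupport _).trans ?_
  refine (tsupport_fderiv_apply_subset ℝ v).trans ?_
  exact tsupport_fderiv_apply_subset ℝ v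

lemma hasCompactSupport_grushin (hF : HasCompactSupport F) : HasCompactSupport (grushin F) := by
  refine .intro hF.isCompact fun z hz => ?_
  have hzero : ∀ v, secondDeriv F z v = 0 := fun v =>
    Function.notMem_support.1 fun h => hz (support_secondDeriv_subset F v h)
  simp [grushin, laplacianX, laplacianY, hzero]

end GrushinCalculus

section GrushinGauge

variable {N k : ℕ}

/-- The gauge `ρ(z) = √(1 + |x|⁴ + |y|²)`, of which the weight `Θ` is a function. -/
def grushinGauge (z : Euc N × Euc k) : ℝ :=
  √(1 + ‖z.1‖ ^ 4 + ‖z.2‖ ^ 2)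

lemma grushinGauge_sq (z : Euc N × Euc k) :
    grushinGauge z ^ 2 = 1 + ‖z.1‖ ^ 4 + ‖z.2‖ ^ 2 :=
  Real.sq_sqrt (by positivity)

lemma one_le_grushinGauge (z : Euc N × Euc k) : 1 ≤ grushinGauge z :=
  Real.one_le_sqrt.2 (by linarith [pow_nonneg (norm_nonneg z.1) 4, sq_nonneg ‖z.2‖])

lemma grushinGauge_pos (z : Euc N × Euc k) : 0 < grushinGauge z :=
  one_pos.trans_le (one_le_grushinGauge z)

lemma norm_fst_sq_le_grushinGauge (z : Euc N × Euc k) : ‖z.1‖ ^ 2 ≤ grushinGauge z :=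
  Real.le_sqrt_of_sq_le (by nlinarith [sq_nonneg ‖z.2‖])

lemma norm_le_grushinGauge (z : Euc N × Euc k) : ‖z‖ ≤ grushinGauge z := by
  refine max_le ?_ ?_
  · nlinarith [norm_fst_sq_le_grushinGauge z, one_le_grushinGauge z]
  · exact Real.le_sqrt_of_sq_le (by linarith [pow_nonneg (norm_nonneg z.1) 4])

lemma contDiff_grushinGauge_sq {n : WithTop ℕ∞} :
    ContDiff ℝ n fun z : Euc N × Euc k => 1 + ‖z.1‖ ^ 4 + ‖z.2‖ ^ 2 := by
  have hx : ContDiff ℝ n fun z : Euc N × Euc k => (‖z.1‖ ^ 2) ^ 2 :=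
    (contDiff_fst.norm_sq ℝ).pow 2
  simp only [← pow_mul, Nat.reduceMul] at hx
  exact (contDiff_const.add hx).add (contDiff_snd.norm_sq ℝ)

lemma contDiff_grushinGauge {n : WithTop ℕ∞} :
    ContDiff ℝ n (grushinGauge : Euc N × Euc k → ℝ) :=
  contDiff_grushinGauge_sq.sqrt fun _ => by positivity

lemma continuous_grushinGauge : Continuous (grushinGauge : Euc N × Euc k → ℝ) :=
  contDiff_grushinGauge (n := 0).continuous

lemma fderiv_grushinGauge_sq (z v : Euc N × Euc k) :
    fderiv ℝ (fun w : Euc N × Euc k => grushinGauge w ^ 2) z v =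
      4 * ‖z.1‖ ^ 2 * inner ℝ z.1 v.1 + 2 * inner ℝ z.2 v.2 := by
  have hx := (hasFDerivAt_fst (𝕜 := ℝ) (p := z)).norm_sq.pow 2
  have hy := (hasFDerivAt_snd (𝕜 := ℝ) (p := z)).norm_sq
  have hsum := (hx.const_add 1).add hy
  simp only [← pow_mul, Nat.reduceMul] at hsum
  simp_rw [grushinGauge_sq]
  refine (DFunLike.congr_fun hsum.fderiv v).trans ?_
  simp only [Nat.add_one_sub_one, mul_one, nsmul_eq_mul, Nat.cast_ofNat, add_apply, smul_apply,
    ContinuousLinearMap.comp_apply, ContinuousLinearMap.coe_fst', coe_innerSL_apply, smul_eq_mul,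
    ContinuousLinearMap.coe_snd']
  ring

lemma secondDeriv_grushinGauge_sq (z v : Euc N × Euc k) :
    secondDeriv (fun w : Euc N × Euc k => grushinGauge w ^ 2) z v =
      8 * inner ℝ z.1 v.1 ^ 2 + 4 * ‖z.1‖ ^ 2 * ‖v.1‖ ^ 2 + 2 * ‖v.2‖ ^ 2 := by
  unfold secondDeriv
  simp_rw [fderiv_grushinGauge_sq]
  have hfst := hasFDerivAt_fst (𝕜 := ℝ) (p := z)
  have hx := (hfst.norm_sq.const_mul 4).mul (hfst.inner ℝ (hasFDerivAt_const v.1 z))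
  have hy := (hasFDerivAt_snd (𝕜 := ℝ) (p := z)).inner ℝ (hasFDerivAt_const v.2 z) |>.const_mul 2
  refine (DFunLike.congr_fun (hx.add hy).fderiv v).trans ?_
  simp only [add_apply, smul_apply, ContinuousLinearMap.comp_apply, ContinuousLinearMap.prod_apply,
    ContinuousLinearMap.coe_fst', zero_apply, fderivInnerCLM_apply, inner_zero_right,
    real_inner_self_eq_norm_sq, zero_add, smul_eq_mul, coe_innerSL_apply, nsmul_eq_mul,
    Nat.cast_ofNat, ContinuousLinearMap.coe_snd']
  ring

lemma sum_inner_single_sq {n : ℕ} (x : Euc n) :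
    ∑ i, inner ℝ x (EuclideanSpace.single i (1 : ℝ)) ^ 2 = ‖x‖ ^ 2 := by
  simp [EuclideanSpace.inner_single_right, EuclideanSpace.norm_sq_eq]

lemma grushinGradSq_grushinGauge_sq (z : Euc N × Euc k) :
    grushinGradSq (fun w : Euc N × Euc k => grushinGauge w ^ 2) z =
      16 * ‖z.1‖ ^ 6 + 4 * ‖z.1‖ ^ 2 * ‖z.2‖ ^ 2 := by
  simp only [grushinGradSq, fderiv_grushinGauge_sq, inner_zero_right, mul_zero, add_zero, zero_add,
    mul_pow, ← Finset.mul_sum, sum_inner_single_sq]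
  ring

lemma grushin_grushinGauge_sq (z : Euc N × Euc k) :
    grushin (fun w : Euc N × Euc k => grushinGauge w ^ 2) z =
      2 * (2 * ((N : ℝ) + 2) + k) * ‖z.1‖ ^ 2 := by
  simp only [grushin, laplacianX, laplacianY, secondDeriv_grushinGauge_sq, inner_zero_right,
    Finset.sum_add_distrib, ← Finset.mul_sum, sum_inner_single_sq, PiLp.norm_single, norm_zero,
    norm_one, Finset.sum_const, Finset.card_univ, Fintype.card_fin, nsmul_eq_mul]
  ring

/- Applying the chain rule to `ρ²`, a polynomial in `|x|²` and `|y|²`, and solving for `ρ`. -/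
lemma grushinGauge_sq_mul_grushinGradSq (z : Euc N × Euc k) :
    grushinGauge z ^ 2 * grushinGradSq (grushinGauge : Euc N × Euc k → ℝ) z =
      4 * ‖z.1‖ ^ 6 + ‖z.1‖ ^ 2 * ‖z.2‖ ^ 2 := by
  have hpow := grushinGradSq_grushinGauge_sq z
  have hchain := fderiv_comp_real (g := fun r => r ^ 2) (by fun_prop)
    (contDiff_grushinGauge.differentiable one_ne_zero) z
  simp only [grushinGradSq, hchain, mul_pow, ← Finset.mul_sum] at hpow ⊢
  simp only [differentiableAt_fun_id, deriv_fun_pow, Nat.cast_ofNat, Nat.add_one_sub_one, pow_one,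
    deriv_id'', mul_one] at hpow
  linarith

lemma grushinGauge_mul_grushin (z : Euc N × Euc k) :
    grushinGauge z * grushin (grushinGauge : Euc N × Euc k → ℝ) z =
      (2 * ((N : ℝ) + 2) + k) * ‖z.1‖ ^ 2 - grushinGradSq (grushinGauge : Euc N × Euc k → ℝ) z := by
  have hpow := grushin_grushinGauge_sq z
  have hderiv : deriv (fun r : ℝ => r ^ 2) = fun r => 2 * r := by
    funext r
    simp
  rw [grushin_comp (g := fun r => r ^ 2) (by fun_prop) contDiff_grushinGauge, hderiv] at hpow
  simp only [deriv_const_mul_id'] at hpow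
  linarith

lemma grushinGradSq_grushinGauge_le (z : Euc N × Euc k) :
    grushinGradSq (grushinGauge : Euc N × Euc k → ℝ) z ≤ 4 * grushinGauge z := by
  refine le_of_mul_le_mul_left ?_ (pow_pos (grushinGauge_pos z) 2)
  calc grushinGauge z ^ 2 * grushinGradSq (grushinGauge : Euc N × Euc k → ℝ) z
      = 4 * ‖z.1‖ ^ 6 + ‖z.1‖ ^ 2 * ‖z.2‖ ^ 2 := grushinGauge_sq_mul_grushinGradSq z
    _ ≤ 4 * (‖z.1‖ ^ 2 * (1 + ‖z.1‖ ^ 4 + ‖z.2‖ ^ 2)) := by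
      nlinarith [sq_nonneg ‖z.1‖, sq_nonneg (‖z.1‖ * ‖z.2‖)]
    _ ≤ 4 * (grushinGauge z * grushinGauge z ^ 2) := by
      rw [← grushinGauge_sq]
      gcongr
      exact norm_fst_sq_le_grushinGauge z
    _ = grushinGauge z ^ 2 * (4 * grushinGauge z) := by ring

lemma grushin_grushinGauge_le (z : Euc N × Euc k) :
    grushin (grushinGauge : Euc N × Euc k → ℝ) z ≤ 2 * ((N : ℝ) + 2) + k := by
  refine le_of_mul_le_mul_left ?_ (grushinGauge_pos z)
  rw [grushinGauge_mul_grushin, mul_comm (grushinGauge z)]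
  have hx : (2 * ((N : ℝ) + 2) + k) * ‖z.1‖ ^ 2 ≤ (2 * ((N : ℝ) + 2) + k) * grushinGauge z := by
    gcongr
    exact norm_fst_sq_le_grushinGauge z
  linarith [grushinGradSq_nonneg (grushinGauge : Euc N × Euc k → ℝ) z]

lemma neg_four_le_grushin_grushinGauge (z : Euc N × Euc k) :
    -4 ≤ grushin (grushinGauge : Euc N × Euc k → ℝ) z := by
  refine le_of_mul_le_mul_left ?_ (grushinGauge_pos z)
  rw [grushinGauge_mul_grushin]
  have hx : 0 ≤ (2 * ((N : ℝ) + 2) + k) * ‖z.1‖ ^ 2 := by positivity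
  linarith [grushinGradSq_grushinGauge_le z]

lemma abs_grushin_grushinGauge_le (z : Euc N × Euc k) :
    |grushin (grushinGauge : Euc N × Euc k → ℝ) z| ≤
      (2 * ((N : ℝ) + 2) + k) * grushinGauge z := by
  have hQ : (4 : ℝ) ≤ 2 * ((N : ℝ) + 2) + k := by
    linarith [Nat.cast_nonneg (α := ℝ) N, Nat.cast_nonneg (α := ℝ) k]
  have hQρ : 2 * ((N : ℝ) + 2) + k ≤ (2 * ((N : ℝ) + 2) + k) * grushinGauge z :=
    le_mul_of_one_le_right (zero_le_four.trans hQ) (one_le_grushinGauge z)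
  have hlower := neg_four_le_grushin_grushinGauge z
  exact abs_le.2 ⟨by linarith only [hQ, hQρ, hlower], (grushin_grushinGauge_le z).trans hQρ⟩

lemma abs_grushin_comp_grushinGauge_le {h : ℝ → ℝ} (hh : ContDiff ℝ 2 h) {M : ℝ}
    {z : Euc N × Euc k} (h₁ : |deriv h (grushinGauge z)| ≤ M)
    (h₂ : |deriv (deriv h) (grushinGauge z)| ≤ M) :
    |grushin (fun w => h (grushinGauge w)) z| ≤
      M * ((4 + (2 * ((N : ℝ) + 2) + k)) * grushinGauge z) := by
  have hM : 0 ≤ M := (abs_nonneg _).trans h₁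
  rw [grushin_comp hh contDiff_grushinGauge]
  refine (abs_add_le _ _).trans ?_
  rw [abs_mul, abs_mul, abs_of_nonneg (grushinGradSq_nonneg _ z)]
  calc _ ≤ M * (4 * grushinGauge z) + M * ((2 * ((N : ℝ) + 2) + k) * grushinGauge z) := by
        gcongr
        · exact grushinGradSq_nonneg _ z
        · exact grushinGradSq_grushinGauge_le z
        · exact abs_grushin_grushinGauge_le z
    _ = _ := by ring

end GrushinGauge

section DuBoisReymond

variable {a b : ℝ} {f H : ℝ → ℝ}

/-- Smooth test functions on the open interval `(a, b)`, the boundary points being kept out of the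
closed support. -/
structure IsTestFunctionOn (a b : ℝ) (ψ : ℝ → ℝ) : Prop where
  contDiff : ContDiff ℝ (⊤ : ℕ∞) ψ
  hasCompactSupport : HasCompactSupport ψ
  tsupport_subset : tsupport ψ ⊆ Set.Ioo a b

namespace IsTestFunctionOn

variable {ψ : ℝ → ℝ}

lemma eq_zero_of_notMem (hψ : IsTestFunctionOn a b ψ) {t : ℝ} (ht : t ∉ Set.Ioo a b) : ψ t = 0 :=
  image_eq_zero_of_notMem_tsupport fun h => ht (hψ.tsupport_subset h)

lemma deriv (hψ : IsTestFunctionOn a b ψ) : IsTestFunctionOn a b (deriv ψ) where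
  contDiff := (contDiff_infty_iff_deriv.1 hψ.contDiff).2
  hasCompactSupport := hψ.hasCompactSupport.deriv
  tsupport_subset := tsupport_deriv_subset.trans hψ.tsupport_subset

lemma sub_const_mul (hψ : IsTestFunctionOn a b ψ) {η : ℝ → ℝ} (hη : IsTestFunctionOn a b η)
    (c : ℝ) : IsTestFunctionOn a b fun t => ψ t - c * η t where
  contDiff := hψ.contDiff.sub (contDiff_const.mul hη.contDiff)
  hasCompactSupport := hψ.hasCompactSupport.sub hη.hasCompactSupport.mul_left
  tsupport_subset := (tsupport_sub ψ _).trans <| Set.union_subset hψ.tsupport_subset <|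
    (tsupport_mul_subset_right (f := fun _ => c)).trans hη.tsupport_subset

lemma continuous (hψ : IsTestFunctionOn a b ψ) : Continuous ψ :=
  hψ.contDiff.continuous

lemma exists_tsupport_subset_Icc (hψ : IsTestFunctionOn a b ψ) (hab : a < b) :
    ∃ l r, a < l ∧ r < b ∧ tsupport ψ ⊆ Set.Icc l r := by
  obtain hempty | hne := (tsupport ψ).eq_empty_or_nonempty
  · exact ⟨b, a, hab, hab, by simp [hempty]⟩
  have hcompact : IsCompact (tsupport ψ) := hψ.hasCompactSupport
  exact ⟨sInf (tsupport ψ), sSup (tsupport ψ),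
    (hψ.tsupport_subset (hcompact.sInf_mem hne)).1, (hψ.tsupport_subset (hcompact.sSup_mem hne)).2,
    fun t ht => ⟨csInf_le hcompact.bddBelow ht, le_csSup hcompact.bddAbove ht⟩⟩

lemma exists_deriv_eq (hψ : IsTestFunctionOn a b ψ) (hab : a < b) (hmean : ∫ t in a..b, ψ t = 0) :
    ∃ Ψ, IsTestFunctionOn a b Ψ ∧ _root_.deriv Ψ = ψ := by
  obtain ⟨l, r, hal, hrb, hsupp⟩ := hψ.exists_tsupport_subset_Icc hab
  have hzero : ∀ t ∉ Set.Icc l r, ψ t = 0 := fun t ht =>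
    image_eq_zero_of_notMem_tsupport fun h => ht (hsupp h)
  have hderiv : ∀ t, HasDerivAt (fun t => ∫ s in a..t, ψ s) (ψ t) t := fun t =>
    hψ.continuous.integral_hasStrictDerivAt a t |>.hasDerivAt
  have hderiv_eq : _root_.deriv (fun t => ∫ s in a..t, ψ s) = ψ := funext fun t => (hderiv t).deriv
  have hint : ∀ s t, IntervalIntegrable ψ volume s t := hψ.continuous.intervalIntegrable
  have hprim_zero : ∀ t ∉ Set.Icc l r, ∫ s in a..t, ψ s = 0 := by
    intro t ht
    obtain htl | hrt : t < l ∨ r < t := by simpa [or_iff_not_imp_left] using ht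
    · refine intervalIntegral.integral_zero_ae (.of_forall fun s hs => hzero s fun hs' => ?_)
      exact (hs.2.trans_lt (max_lt hal htl)).not_ge hs'.1
    · rw [← intervalIntegral.integral_add_adjacent_intervals (hint a b) (hint b t), hmean, zero_add]
      refine intervalIntegral.integral_zero_ae (.of_forall fun s hs => hzero s fun hs' => ?_)
      exact ((lt_min hrb hrt).trans hs.1).not_ge hs'.2
  have hprim_supp : tsupport (fun t => ∫ s in a..t, ψ s) ⊆ Set.Icc l r :=
    closure_minimal (Function.support_subset_iff'.2 hprim_zero) isClosed_Icc
  refine ⟨fun t => ∫ s in a..t, ψ s, ⟨?_, ?_, ?_⟩, hderiv_eq⟩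
  · rw [contDiff_infty_iff_deriv, hderiv_eq]
    exact ⟨fun t => (hderiv t).differentiableAt, hψ.contDiff⟩
  · exact .of_support_subset_isCompact isCompact_Icc ((subset_tsupport _).trans hprim_supp)
  · exact hprim_supp.trans (Set.Icc_subset_Ioo hal hrb)

lemma exists_integral_eq_one (hab : a < b) :
    ∃ η, IsTestFunctionOn a b η ∧ ∫ t in a..b, η t = 1 := by
  let χ : ContDiffBump ((a + b) / 2) := ⟨(b - a) / 8, (b - a) / 4, by linarith, by linarith⟩
  have hsupp : tsupport (χ.normed volume) ⊆ Set.Ioo a b := by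
    rw [χ.tsupport_normed_eq, Real.closedBall_eq_Icc]
    exact Set.Icc_subset_Ioo (by simp only [χ]; linarith) (by simp only [χ]; linarith)
  refine ⟨χ.normed volume, ⟨χ.contDiff_normed, χ.hasCompactSupport_normed, hsupp⟩, ?_⟩
  rw [intervalIntegral.integral_eq_integral_of_support_subset, χ.integral_normed]
  exact (subset_tsupport _).trans (hsupp.trans Set.Ioo_subset_Ioc_self)

end IsTestFunctionOn

lemma eqOn_zero_of_integral_mul_eq_zero (hab : a < b) (hf : ContinuousOn f (Set.Icc a b))
    (hzero : ∀ g, IsTestFunctionOn a b g → ∫ t in a..b, f t * g t = 0) :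
    Set.EqOn f 0 (Set.Icc a b) := by
  have hfIoo : ContinuousOn f (Set.Ioo a b) := hf.mono Set.Ioo_subset_Icc_self
  have hae : ∀ᵐ t, t ∈ Set.Ioo a b → f t = 0 := by
    refine isOpen_Ioo.ae_eq_zero_of_integral_contDiff_smul_eq_zero
      (hfIoo.locallyIntegrableOn measurableSet_Ioo) fun g hg hg_compact hg_supp => ?_
    rw [← hzero g ⟨hg, hg_compact, hg_supp⟩,
      intervalIntegral.integral_eq_integral_of_support_subset]
    · simp only [smul_eq_mul, mul_comm]
    · exact (Function.support_mul_subset_right f g).trans <|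
        (subset_tsupport g).trans <| hg_supp.trans Set.Ioo_subset_Ioc_self
  have hIoo : Set.EqOn f 0 (Set.Ioo a b) :=
    Measure.eqOn_open_of_ae_eq ((ae_restrict_iff' measurableSet_Ioo).2 hae) isOpen_Ioo hfIoo
      continuousOn_const
  exact hIoo.of_subset_closure hf continuousOn_const Set.Ioo_subset_Icc_self
    (closure_Ioo hab.ne).ge

lemma exists_eqOn_const_of_integral_mul_deriv_eq_zero (hab : a < b)
    (hf : ContinuousOn f (Set.Icc a b))
    (hzero : ∀ ψ, IsTestFunctionOn a b ψ → ∫ t in a..b, f t * deriv ψ t = 0) :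
    ∃ C, ∀ t ∈ Set.Icc a b, f t = C := by
  obtain ⟨η, hη, hη_one⟩ := IsTestFunctionOn.exists_integral_eq_one hab
  have hint {ψ : ℝ → ℝ} (hψ : IsTestFunctionOn a b ψ) :
      IntervalIntegrable (fun t => f t * ψ t) volume a b :=
    (hf.mul hψ.continuous.continuousOn).intervalIntegrable_of_Icc hab.le
  set C := ∫ t in a..b, f t * η t
  refine ⟨C, fun t ht => sub_eq_zero.1 <|
    eqOn_zero_of_integral_mul_eq_zero (f := fun t => f t - C) hab (hf.sub continuousOn_const)
      (fun g hg => ?_) ht⟩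
  -- `g - m η` has mean zero, so it is the derivative of a test function.
  set m := ∫ t in a..b, g t
  have hmean : ∫ t in a..b, (g t - m * η t) = 0 := by
    rw [intervalIntegral.integral_sub (hg.continuous.intervalIntegrable _ _)
      ((hη.continuous.intervalIntegrable _ _).const_mul _), intervalIntegral.integral_const_mul,
      hη_one, mul_one, sub_self]
  obtain ⟨Ψ, hΨ, hΨ_deriv⟩ := (hg.sub_const_mul hη m).exists_deriv_eq hab hmean
  calc ∫ t in a..b, (f t - C) * g t
      = (∫ t in a..b, f t * g t) - C * m := by
        simp_rw [sub_mul]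
        rw [intervalIntegral.integral_sub (hint hg)
          ((hg.continuous.intervalIntegrable _ _).const_mul _), intervalIntegral.integral_const_mul]
    _ = ∫ t in a..b, f t * deriv Ψ t := by
        simp_rw [hΨ_deriv, mul_sub, mul_left_comm _ m]
        rw [intervalIntegral.integral_sub (hint hg) ((hint hη).const_mul _),
          intervalIntegral.integral_const_mul, mul_comm m]
    _ = 0 := hzero Ψ hΨ

lemma hasDerivWithinAt_integral_Icc (hH : ContinuousOn H (Set.Icc a b)) {t : ℝ}
    (ht : t ∈ Set.Icc a b) :
    HasDerivWithinAt (fun t => ∫ s in a..t, H s) (H t) (Set.Icc a b) t := by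
  have : Fact (t ∈ Set.Icc a b) := ⟨ht⟩
  exact intervalIntegral.integral_hasDerivWithinAt_right
    ((hH.mono (Set.Icc_subset_Icc_right ht.2)).intervalIntegrable_of_Icc ht.1)
    (hH.stronglyMeasurableAtFilter_nhdsWithin measurableSet_Icc t) (hH t ht)

lemma integral_primitive_mul_deriv (hab : a ≤ b) (hH : ContinuousOn H (Set.Icc a b)) {ψ : ℝ → ℝ}
    (hψ : IsTestFunctionOn a b ψ) :
    ∫ t in a..b, (∫ s in a..t, H s) * deriv ψ t = -∫ t in a..b, H t * ψ t := by
  rw [intervalIntegral.integral_mul_deriv_eq_deriv_mul_of_hasDerivWithinAt (u' := H) (v := ψ),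
    hψ.eq_zero_of_notMem Set.left_notMem_Ioo, hψ.eq_zero_of_notMem Set.right_notMem_Ioo]
  · ring
  · rw [Set.uIcc_of_le hab]
    exact fun t => hasDerivWithinAt_integral_Icc hH
  · exact fun t _ => ((hψ.contDiff.differentiable (by simp)) t).hasDerivAt.hasDerivWithinAt
  · exact hH.intervalIntegrable_of_Icc hab
  · exact hψ.deriv.continuous.intervalIntegrable _ _

lemma eq_add_integral_of_integral_add_integral_mul_deriv_eq_zero (hab : a < b)
    (hf : ContinuousOn f (Set.Icc a b)) (hH : ContinuousOn H (Set.Icc a b))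
    (hweak : ∀ ψ, IsTestFunctionOn a b ψ →
      (∫ t in a..b, H t * ψ t) + ∫ t in a..b, f t * deriv ψ t = 0) :
    ∀ t ∈ Set.Icc a b, f t = f a + ∫ s in a..t, H s := by
  have hP : ContinuousOn (fun t => ∫ s in a..t, H s) (Set.Icc a b) := fun t ht =>
    (hasDerivWithinAt_integral_Icc hH ht).continuousWithinAt
  have horth (ψ : ℝ → ℝ) (hψ : IsTestFunctionOn a b ψ) :
      ∫ t in a..b, (f t - ∫ s in a..t, H s) * deriv ψ t = 0 := by
    have hψ' : ContinuousOn (deriv ψ) (Set.Icc a b) := hψ.deriv.continuous.continuousOn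
    simp_rw [sub_mul]
    refine (intervalIntegral.integral_sub ((hf.mul hψ').intervalIntegrable_of_Icc hab.le)
      ((hP.mul hψ').intervalIntegrable_of_Icc hab.le)).trans ?_
    simp only [Pi.mul_apply, integral_primitive_mul_deriv hab.le hH hψ]
    linarith [hweak ψ hψ]
  obtain ⟨C, hC⟩ := exists_eqOn_const_of_integral_mul_deriv_eq_zero hab (hf.sub hP) horth
  intro t ht
  have hCa : f a = C := by
    simpa only [Pi.sub_apply, intervalIntegral.integral_same, sub_zero]
      using hC a (Set.left_mem_Icc.2 hab.le)
  rw [hCa, ← hC t ht, Pi.sub_apply, sub_add_cancel]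

lemma hasDerivWithinAt_of_eq_add_integral (hH : ContinuousOn H (Set.Icc a b))
    (hfH : ∀ t ∈ Set.Icc a b, f t = f a + ∫ s in a..t, H s) {t : ℝ} (ht : t ∈ Set.Icc a b) :
    HasDerivWithinAt f (H t) (Set.Icc a b) t :=
  ((hasDerivWithinAt_integral_Icc hH ht).const_add (f a)).congr hfH (hfH t ht)

lemma contDiffOn_one_of_hasDerivWithinAt (hab : a < b) (hH : ContinuousOn H (Set.Icc a b))
    (hderiv : ∀ t ∈ Set.Icc a b, HasDerivWithinAt f (H t) (Set.Icc a b) t) :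
    ContDiffOn ℝ 1 f (Set.Icc a b) := by
  have hunique : UniqueDiffOn ℝ (Set.Icc a b) := uniqueDiffOn_Icc hab
  refine (contDiffOn_one_iff_derivWithin hunique).2
    ⟨fun t ht => (hderiv t ht).differentiableWithinAt, hH.congr fun t ht => ?_⟩
  exact (hderiv t ht).derivWithin (hunique t ht)

end DuBoisReymond

section WeightedJensen

variable {E : Type*} [MeasurableSpace E] {μ : Measure E}

lemma convexOn_map_integral_mul_le {g : ℝ → ℝ} {s : Set ℝ} (hg : ConvexOn ℝ s g)
    (hg_cont : ContinuousOn g s) (hs : IsClosed s) {v w : E → ℝ} (hw : ∀ z, 0 ≤ w z)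
    (hw_one : ∫ z, w z ∂μ = 1) (hv : ∀ z, v z ∈ s) (hvw : Integrable (fun z => v z * w z) μ)
    (hgw : Integrable (fun z => g (v z) * w z) μ) :
    g (∫ z, v z * w z ∂μ) ≤ ∫ z, g (v z) * w z ∂μ := by
  have hw_int : Integrable w μ := .of_integral_ne_zero (hw_one ▸ one_ne_zero)
  have hdens : AEMeasurable (fun z => ENNReal.ofReal (w z)) μ := hw_int.aemeasurable.ennreal_ofReal
  have hfin : ∀ᵐ z ∂μ, ENNReal.ofReal (w z) < ⊤ := .of_forall fun _ => ENNReal.ofReal_lt_top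
  have : IsProbabilityMeasure (μ.withDensity fun z => ENNReal.ofReal (w z)) := ⟨by
    rw [withDensity_apply _ .univ, Measure.restrict_univ,
      ← ofReal_integral_eq_lintegral_ofReal hw_int (.of_forall hw), hw_one, ENNReal.ofReal_one]⟩
  have jensen := hg.map_integral_le (μ := μ.withDensity fun z => ENNReal.ofReal (w z)) hg_cont hs
    (.of_forall hv)
  simp only [integrable_withDensity_iff_integrable_smul₀' hdens hfin,
    integral_withDensity_eq_integral_toReal_smul₀ hdens hfin, ENNReal.toReal_ofReal (hw _),
    smul_eq_mul, mul_comm (w _), Function.comp_apply] at jensen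
  exact jensen hvw hgw

end WeightedJensen

section WeightedIntegral

variable {E : Type*} [TopologicalSpace E] {v : E → ℝ → ℝ} {S : Set ℝ} {w : E → ℝ}

/-- Functions `v(z, t)` that are bounded and jointly continuous for `z ∈ E` and `t ∈ S`. -/
structure IsBoundedContinuousOn (v : E → ℝ → ℝ) (S : Set ℝ) : Prop where
  continuousOn : ContinuousOn (Function.uncurry v) (Set.univ ×ˢ S)
  exists_bound : ∃ M, ∀ t ∈ S, ∀ z, ‖v z t‖ ≤ M

namespace IsBoundedContinuousOn

lemma continuous_space (hv : IsBoundedContinuousOn v S) {t : ℝ} (ht : t ∈ S) :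
    Continuous fun z => v z t :=
  hv.continuousOn.comp_continuous (f := fun z => (z, t)) (by fun_prop) fun _ => ⟨trivial, ht⟩

lemma continuousOn_time (hv : IsBoundedContinuousOn v S) (z : E) : ContinuousOn (v z) S :=
  hv.continuousOn.comp (f := fun t => (z, t)) (by fun_prop) fun _ ht => ⟨trivial, ht⟩

lemma mono (hv : IsBoundedContinuousOn v S) {S' : Set ℝ} (hS : S' ⊆ S) :
    IsBoundedContinuousOn v S' where
  continuousOn := hv.continuousOn.mono (Set.prod_mono_right hS)
  exists_bound := hv.exists_bound.imp fun _ hM t ht => hM t (hS ht)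

lemma rpow (hv : IsBoundedContinuousOn v S) (hv0 : ∀ z, ∀ t ∈ S, 0 ≤ v z t) {p : ℝ}
    (hp : 0 ≤ p) : IsBoundedContinuousOn (fun z t => v z t ^ p) S where
  continuousOn := hv.continuousOn.rpow_const fun _ _ => .inr hp
  exists_bound := by
    obtain ⟨M, hM⟩ := hv.exists_bound
    refine ⟨M ^ p, fun t ht z => ?_⟩
    rw [Real.norm_rpow_of_nonneg (hv0 z t ht)]
    exact Real.rpow_le_rpow (norm_nonneg _) (hM t ht z) hp

variable [MeasurableSpace E] {μ : Measure E}

lemma exists_norm_integral_mul_le (hv : IsBoundedContinuousOn v S) {b : E → ℝ}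
    (hb : Integrable b μ) :
    ∃ B, ∀ t ∈ S, ∀ w : E → ℝ, (∀ z, ‖w z‖ ≤ b z) → ‖∫ z, v z t * w z ∂μ‖ ≤ B := by
  obtain ⟨M, hM⟩ := hv.exists_bound
  refine ⟨∫ z, M * b z ∂μ, fun t ht w hwb =>
    norm_integral_le_of_norm_le (hb.const_mul M) (.of_forall fun z => ?_)⟩
  rw [norm_mul]
  exact mul_le_mul (hM t ht z) (hwb z) (norm_nonneg _) ((norm_nonneg _).trans (hM t ht z))

variable [OpensMeasurableSpace E]

lemma integrable_mul (hv : IsBoundedContinuousOn v S) {t : ℝ} (ht : t ∈ S) (hw : Integrable w μ) :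
    Integrable (fun z => v z t * w z) μ := by
  obtain ⟨M, hM⟩ := hv.exists_bound
  exact hw.bdd_mul (hv.continuous_space ht).aestronglyMeasurable (.of_forall (hM t ht))

lemma continuousOn_integral_mul (hv : IsBoundedContinuousOn v S) (hw : Integrable w μ) :
    ContinuousOn (fun t => ∫ z, v z t * w z ∂μ) S := by
  obtain ⟨M, hM⟩ := hv.exists_bound
  refine continuousOn_of_dominated (bound := fun z => M * ‖w z‖)
    (fun t ht => (hv.integrable_mul ht hw).aestronglyMeasurable)
    (fun t ht => .of_forall fun z => ?_) (hw.norm.const_mul M)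
    (.of_forall fun z => (hv.continuousOn_time z).mul continuousOn_const)
  rw [norm_mul]
  gcongr
  exact hM t ht z

lemma tendsto_integral_mul (hv : IsBoundedContinuousOn v S) {t : ℝ} (ht : t ∈ S) {wn : ℕ → E → ℝ}
    {b : E → ℝ} (hwn : ∀ n, AEStronglyMeasurable (wn n) μ) (hb : Integrable b μ)
    (hwb : ∀ n z, ‖wn n z‖ ≤ b z) (hlim : ∀ z, Tendsto (fun n => wn n z) atTop (nhds (w z))) :
    Tendsto (fun n => ∫ z, v z t * wn n z ∂μ) atTop (nhds (∫ z, v z t * w z ∂μ)) := by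
  obtain ⟨M, hM⟩ := hv.exists_bound
  refine tendsto_integral_of_dominated_convergence (fun z => M * b z)
    (fun n => (hv.continuous_space ht).aestronglyMeasurable.mul (hwn n)) (hb.const_mul M)
    (fun n => .of_forall fun z => ?_) (.of_forall fun z => (hlim z).const_mul _)
  rw [norm_mul]
  exact mul_le_mul (hM t ht z) (hwb n z) (norm_nonneg _) ((norm_nonneg _).trans (hM t ht z))

end IsBoundedContinuousOn

end WeightedIntegral

section MemoryIntegral

variable {γ t T : ℝ} {g h : ℝ → ℝ}

/-- The memory integral `∫₀ᵗ (t - s)^(-γ) h(s) ds`, that is `Γ(1 - γ)` times the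
Riemann–Liouville fractional integral of `h` of order `1 - γ`. -/
def memoryIntegral (γ : ℝ) (h : ℝ → ℝ) (t : ℝ) : ℝ :=
  ∫ s in Set.Ioc 0 t, (t - s) ^ (-γ) * h s

lemma Gamma_mul_fracInt (hγ : γ < 1) (h : ℝ → ℝ) (t : ℝ) :
    Real.Gamma (1 - γ) * fracInt (1 - γ) h t = memoryIntegral γ h t := by
  have hΓ : Real.Gamma (1 - γ) ≠ 0 := (Real.Gamma_pos_of_pos (sub_pos.2 hγ)).ne'
  rw [fracInt, memoryIntegral, ← mul_assoc, mul_one_div_cancel hΓ, one_mul, sub_sub_cancel_left]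

lemma norm_memoryKernel_mul_le {s x B : ℝ} (hst : s ≤ t) (hx : ‖x‖ ≤ B) :
    ‖(t - s) ^ (-γ) * x‖ ≤ (t - s) ^ (-γ) * B := by
  have hkernel : 0 ≤ (t - s) ^ (-γ) := Real.rpow_nonneg (sub_nonneg.2 hst) _
  rw [norm_mul, Real.norm_of_nonneg hkernel]
  exact mul_le_mul_of_nonneg_left hx hkernel

lemma integrableOn_memoryKernel (hγ : γ < 1) (t : ℝ) :
    IntegrableOn (fun s => (t - s) ^ (-γ)) (Set.Ioc 0 t) := by
  obtain ht | ht := le_total t 0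
  · simp [Set.Ioc_eq_empty_of_le ht]
  have hrpow := (intervalIntegral.intervalIntegrable_rpow' (a := t) (b := 0) (r := -γ)
    (by linarith)).comp_sub_left t
  rwa [sub_self, sub_zero, intervalIntegrable_iff_integrableOn_Ioc_of_le ht] at hrpow

lemma integrableOn_memoryKernel_mul (hγ : γ < 1) (hh : ContinuousOn h (Set.Icc 0 t)) :
    IntegrableOn (fun s => (t - s) ^ (-γ) * h s) (Set.Ioc 0 t) := by
  obtain ⟨M, hM⟩ := isCompact_Icc.exists_bound_of_continuousOn hh
  refine (integrableOn_memoryKernel hγ t).mul_bdd (c := M)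
    ((hh.mono Set.Ioc_subset_Icc_self).aestronglyMeasurable measurableSet_Ioc) ?_
  filter_upwards [ae_restrict_mem measurableSet_Ioc] with s hs
  exact hM s (Set.Ioc_subset_Icc_self hs)

lemma memoryIntegral_mono (hγ : γ < 1) (hg : ContinuousOn g (Set.Icc 0 t))
    (hh : ContinuousOn h (Set.Icc 0 t)) (hgh : ∀ s ∈ Set.Icc 0 t, g s ≤ h s) :
    memoryIntegral γ g t ≤ memoryIntegral γ h t := by
  refine setIntegral_mono_on (integrableOn_memoryKernel_mul hγ hg)
    (integrableOn_memoryKernel_mul hγ hh) measurableSet_Ioc fun s hs => ?_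
  exact mul_le_mul_of_nonneg_left (hgh s (Set.Ioc_subset_Icc_self hs))
    (Real.rpow_nonneg (sub_nonneg.2 hs.2) _)

lemma norm_memoryIntegral_le (hγ : γ < 1) {B : ℝ} (hB : ∀ s ∈ Set.Icc 0 t, ‖h s‖ ≤ B) :
    ‖memoryIntegral γ h t‖ ≤ memoryIntegral γ (fun _ => B) t := by
  refine norm_integral_le_of_norm_le (integrableOn_memoryKernel_mul hγ continuousOn_const) ?_
  filter_upwards [ae_restrict_mem measurableSet_Ioc] with s hs
  exact norm_memoryKernel_mul_le hs.2 (hB s (Set.Ioc_subset_Icc_self hs))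

lemma tendsto_memoryIntegral (hγ : γ < 1) {hn : ℕ → ℝ → ℝ} {B : ℝ}
    (hn_cont : ∀ n, ContinuousOn (hn n) (Set.Icc 0 t)) (hB : ∀ n, ∀ s ∈ Set.Icc 0 t, ‖hn n s‖ ≤ B)
    (hlim : ∀ s ∈ Set.Icc 0 t, Tendsto (fun n => hn n s) atTop (nhds (h s))) :
    Tendsto (fun n => memoryIntegral γ (hn n) t) atTop (nhds (memoryIntegral γ h t)) := by
  refine tendsto_integral_of_dominated_convergence (fun s => (t - s) ^ (-γ) * B)
    (fun n => (integrableOn_memoryKernel_mul hγ (hn_cont n)).aestronglyMeasurable)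
    ((integrableOn_memoryKernel hγ t).mul_const B) (fun n => ?_) ?_
  · filter_upwards [ae_restrict_mem measurableSet_Ioc] with s hs
    exact norm_memoryKernel_mul_le hs.2 (hB n s (Set.Ioc_subset_Icc_self hs))
  · filter_upwards [ae_restrict_mem measurableSet_Ioc] with s hs
    exact (hlim s (Set.Ioc_subset_Icc_self hs)).const_mul _

lemma memoryIntegral_eq_rpow_mul (hγ : γ < 1) (ht : 0 ≤ t) (h : ℝ → ℝ) :
    memoryIntegral γ h t = t ^ (1 - γ) * memoryIntegral γ (fun r => h (t * r)) 1 := by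
  obtain rfl | ht := ht.eq_or_lt
  · simp [memoryIntegral, Real.zero_rpow (sub_pos.2 hγ).ne']
  simp only [memoryIntegral]
  rw [← intervalIntegral.integral_of_le ht.le, ← intervalIntegral.integral_of_le zero_le_one]
  have hsubst : t * ∫ r in (0 : ℝ)..1, (t - t * r) ^ (-γ) * h (t * r) =
      ∫ s in (0 : ℝ)..t, (t - s) ^ (-γ) * h s := by
    simpa using intervalIntegral.smul_integral_comp_mul_left (a := 0) (b := 1)
      (fun s => (t - s) ^ (-γ) * h s) t
  have hkernel : ∀ r ∈ Set.uIcc (0 : ℝ) 1, (t - t * r) ^ (-γ) * h (t * r) =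
      t ^ (-γ) * ((1 - r) ^ (-γ) * h (t * r)) := by
    intro r hr
    rw [Set.uIcc_of_le zero_le_one] at hr
    rw [← mul_one_sub, Real.mul_rpow ht.le (sub_nonneg.2 hr.2), mul_assoc]
  rw [← hsubst, intervalIntegral.integral_congr hkernel, intervalIntegral.integral_const_mul,
    ← mul_assoc, sub_eq_add_neg, Real.rpow_add ht, Real.rpow_one]

lemma continuousOn_memoryIntegral (hγ : γ < 1) (hh : ContinuousOn h (Set.Icc 0 T)) :
    ContinuousOn (memoryIntegral γ h) (Set.Icc 0 T) := by
  have hmaps : ∀ t ∈ Set.Icc 0 T, ∀ r ∈ Set.Icc (0 : ℝ) 1, t * r ∈ Set.Icc 0 T := fun t ht r hr =>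
    ⟨mul_nonneg ht.1 hr.1, (mul_le_of_le_one_right ht.1 hr.2).trans ht.2⟩
  obtain ⟨M, hM⟩ := isCompact_Icc.exists_bound_of_continuousOn hh
  -- Substituting `s = t r` moves the singularity of the kernel to the fixed point `r = 1`.
  have hscaled : ContinuousOn (fun t => memoryIntegral γ (fun r => h (t * r)) 1) (Set.Icc 0 T) := by
    refine continuousOn_of_dominated (bound := fun r => (1 - r) ^ (-γ) * M) (fun t ht => ?_)
      (fun t ht => ?_) ((integrableOn_memoryKernel hγ 1).mul_const M) ?_
    · refine (integrableOn_memoryKernel_mul hγ ?_).aestronglyMeasurable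
      exact hh.comp (by fun_prop) (hmaps t ht)
    · filter_upwards [ae_restrict_mem measurableSet_Ioc] with r hr
      exact norm_memoryKernel_mul_le hr.2 (hM _ (hmaps t ht r (Set.Ioc_subset_Icc_self hr)))
    · filter_upwards [ae_restrict_mem measurableSet_Ioc] with r hr
      exact continuousOn_const.mul
        (hh.comp (by fun_prop) fun t ht => hmaps t ht r (Set.Ioc_subset_Icc_self hr))
  refine ContinuousOn.congr (f := fun t => t ^ (1 - γ) * memoryIntegral γ (fun r => h (t * r)) 1)
    ?_ fun t ht => memoryIntegral_eq_rpow_mul hγ ht.1 h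
  exact (continuousOn_id.rpow_const fun _ _ => .inr (sub_nonneg.2 hγ.le)).mul hscaled

lemma integral_memoryIntegral_mul {E : Type*} [TopologicalSpace E] [MeasurableSpace E]
    [OpensMeasurableSpace E] {μ : Measure E} [SFinite μ] {v : E → ℝ → ℝ} {w : E → ℝ} (hγ : γ < 1)
    (hv : IsBoundedContinuousOn v (Set.Icc 0 t)) (hw : Integrable w μ) :
    ∫ z, memoryIntegral γ (v z) t * w z ∂μ = memoryIntegral γ (fun s => ∫ z, v z s * w z ∂μ) t := by
  obtain ⟨M, hM⟩ := hv.exists_bound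
  have hrestrict : μ.prod (volume.restrict (Set.Ioc 0 t)) =
      (μ.prod volume).restrict (Set.univ ×ˢ Set.Ioc 0 t) := by
    rw [← Measure.prod_restrict, Measure.restrict_univ]
  have hmeas : MeasurableSet ((Set.univ : Set E) ×ˢ Set.Ioc 0 t) :=
    MeasurableSet.univ.prod measurableSet_Ioc
  have hprod : Integrable (fun q : E × ℝ => (t - q.2) ^ (-γ) * (v q.1 q.2 * w q.1))
      (μ.prod (volume.restrict (Set.Ioc 0 t))) := by
    refine ((hw.mul_prod (integrableOn_memoryKernel hγ t)).bdd_mul (f := Function.uncurry v)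
      (c := M) ?_ ?_).congr (.of_forall fun q => ?_)
    · rw [hrestrict]
      exact (hv.mono Set.Ioc_subset_Icc_self).continuousOn.aestronglyMeasurable hmeas
    · rw [hrestrict]
      filter_upwards [ae_restrict_mem hmeas] with q hq
      exact hM q.2 (Set.Ioc_subset_Icc_self hq.2) q.1
    · simp only [Function.uncurry_def]
      ring
  simp_rw [memoryIntegral, ← integral_mul_const, ← integral_const_mul, mul_assoc]
  exact integral_integral_swap hprod

lemma absPow_of_nonneg {p x : ℝ} (hx : 0 ≤ x) (hp : p ≠ 0) : absPow p x = x ^ p := by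
  rw [absPow, abs_of_nonneg hx]
  nth_rw 2 [← Real.rpow_one x]
  rw [← Real.rpow_add' hx (by simpa using hp), sub_add_cancel]

end MemoryIntegral

section WeakSolution

variable {N k : ℕ} {γ p T : ℝ} {u0 w : Euc N × Euc k → ℝ} {u : Euc N × Euc k → ℝ → ℝ}

/-- The rate of change `∫₀ᵗ (t - s)^(-γ) (∫ u(z, s)ᵖ w(z) dz) ds + ∫ u(z, t) Δ_G w(z) dz` that the
equation prescribes for the average `∫ u(z, t) w(z) dz`. -/
def averageRate (γ p : ℝ) (u : Euc N × Euc k → ℝ → ℝ) (w : Euc N × Euc k → ℝ) (t : ℝ) : ℝ :=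
  memoryIntegral γ (fun s => ∫ z, u z s ^ p * w z) t + ∫ z, u z t * grushin w z

lemma continuousOn_averageRate (hγ : γ < 1) (hp : 0 ≤ p)
    (hu : IsBoundedContinuousOn u (Set.Icc 0 T)) (hu_nonneg : ∀ z, ∀ t ∈ Set.Icc 0 T, 0 ≤ u z t)
    (hw : Integrable w) (hgw : Integrable (grushin w)) :
    ContinuousOn (averageRate γ p u w) (Set.Icc 0 T) :=
  (continuousOn_memoryIntegral hγ ((hu.rpow hu_nonneg hp).continuousOn_integral_mul hw)).add
    (hu.continuousOn_integral_mul hgw)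

lemma integral_Gamma_mul_fracInt_absPow_mul (hγ : γ < 1) (hp : 0 < p)
    (hu : IsBoundedContinuousOn u (Set.Icc 0 T)) (hu_nonneg : ∀ z, ∀ t ∈ Set.Icc 0 T, 0 ≤ u z t)
    (hw : Integrable w) {t : ℝ} (ht : t ∈ Set.Icc 0 T) :
    ∫ z, Real.Gamma (1 - γ) * fracInt (1 - γ) (fun s => absPow p (u z s)) t * w z =
      memoryIntegral γ (fun s => ∫ z, u z s ^ p * w z) t := by
  have hpow (z : Euc N × Euc k) : memoryIntegral γ (fun s => absPow p (u z s)) t =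
      memoryIntegral γ (fun s => u z s ^ p) t := by
    refine setIntegral_congr_fun measurableSet_Ioc fun s hs => ?_
    simp only [absPow_of_nonneg (hu_nonneg z s ⟨hs.1.le, hs.2.trans ht.2⟩) hp.ne']
  simp_rw [Gamma_mul_fracInt hγ, hpow]
  exact integral_memoryIntegral_mul hγ
    ((hu.rpow hu_nonneg hp.le).mono (Set.Icc_subset_Icc_right ht.2)) hw

lemma hasCompactSupport_mul_prod {X Y : Type*} [TopologicalSpace X] [TopologicalSpace Y]
    {f : X → ℝ} {g : Y → ℝ} (hf : HasCompactSupport f) (hg : HasCompactSupport g) :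
    HasCompactSupport fun q : X × Y => f q.1 * g q.2 := by
  refine .intro' (hf.isCompact.prod hg.isCompact)
    ((isClosed_tsupport f).prod (isClosed_tsupport g)) fun q hq => ?_
  obtain hq | hq := not_and_or.1 hq
  · simp only [image_eq_zero_of_notMem_tsupport hq, zero_mul]
  · simp only [image_eq_zero_of_notMem_tsupport hq, mul_zero]

namespace IsWeakSolutionMemory

lemma integral_averageRate_mul_add_eq_zero (hsol : IsWeakSolutionMemory N k γ p T u0 u)
    (hγ : γ < 1) (hp : 0 < p) (hT : 0 ≤ T) (hu : IsBoundedContinuousOn u (Set.Icc 0 T))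
    (hu_nonneg : ∀ z, ∀ t ∈ Set.Icc 0 T, 0 ≤ u z t) (hw : ContDiff ℝ 2 w)
    (hw_compact : HasCompactSupport w) {ψ : ℝ → ℝ} (hψ : IsTestFunctionOn 0 T ψ) :
    (∫ t in 0..T, averageRate γ p u w t * ψ t) +
      ∫ t in 0..T, (∫ z, u z t * w z) * deriv ψ t = 0 := by
  have hw_int : Integrable w := hw.continuous.integrable_of_hasCompactSupport hw_compact
  have hgw_int : Integrable (grushin w) :=
    (continuous_grushin hw).integrable_of_hasCompactSupport (hasCompactSupport_grushin hw_compact)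
  have hsmooth : ContDiff ℝ 2 fun q : (Euc N × Euc k) × ℝ => w q.1 * ψ q.2 :=
    (hw.comp contDiff_fst).mul ((contDiff_infty.1 hψ.contDiff 2).comp contDiff_snd)
  have hψ₀ : ψ 0 = 0 := hψ.eq_zero_of_notMem Set.left_notMem_Ioo
  have hψT : ψ T = 0 := hψ.eq_zero_of_notMem Set.right_notMem_Ioo
  have key := hsol.2 (fun z t => w z * ψ t) hsmooth
    (hasCompactSupport_mul_prod hw_compact hψ.hasCompactSupport)
    fun z => by simp only [hψT, mul_zero]
  simp only [hψ₀, hψT, mul_zero, integral_zero, sub_self, grushin_mul_const hw,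
    deriv_const_mul_field, ← integral_const_mul (Real.Gamma (1 - γ)), ← mul_assoc,
    integral_mul_const] at key
  rw [setIntegral_congr_fun measurableSet_Ioc fun t ht => congrArg (· * ψ t) <|
    integral_Gamma_mul_fracInt_absPow_mul hγ hp hu hu_nonneg hw_int (Set.Ioc_subset_Icc_self ht)]
    at key
  have hmem := continuousOn_memoryIntegral hγ
    ((hu.rpow hu_nonneg hp.le).continuousOn_integral_mul hw_int)
  have hrate : ∫ t in 0..T, averageRate γ p u w t * ψ t =
      (∫ t in 0..T, memoryIntegral γ (fun s => ∫ z, u z s ^ p * w z) t * ψ t) +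
        ∫ t in 0..T, (∫ z, u z t * grushin w z) * ψ t := by
    simp only [averageRate, add_mul]
    exact intervalIntegral.integral_add
      ((hmem.mul hψ.continuous.continuousOn).intervalIntegrable_of_Icc hT)
      (((hu.continuousOn_integral_mul hgw_int).mul
        hψ.continuous.continuousOn).intervalIntegrable_of_Icc hT)
  rw [hrate]
  simp only [intervalIntegral.integral_of_le hT]
  exact key.symm

lemma integral_mul_eq_add_integral_averageRate (hsol : IsWeakSolutionMemory N k γ p T u0 u)
    (hγ : γ < 1) (hp : 0 < p) (hT : 0 < T) (hu : IsBoundedContinuousOn u (Set.Icc 0 T))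
    (hu_nonneg : ∀ z, ∀ t ∈ Set.Icc 0 T, 0 ≤ u z t) (hw : ContDiff ℝ 2 w)
    (hw_compact : HasCompactSupport w) {t : ℝ} (ht : t ∈ Set.Icc 0 T) :
    ∫ z, u z t * w z = (∫ z, u z 0 * w z) + ∫ s in 0..t, averageRate γ p u w s := by
  have hw_int : Integrable w := hw.continuous.integrable_of_hasCompactSupport hw_compact
  have hgw_int : Integrable (grushin w) :=
    (continuous_grushin hw).integrable_of_hasCompactSupport (hasCompactSupport_grushin hw_compact)
  exact eq_add_integral_of_integral_add_integral_mul_deriv_eq_zero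
    (f := fun t => ∫ z, u z t * w z) hT (hu.continuousOn_integral_mul hw_int)
    (continuousOn_averageRate hγ hp.le hu hu_nonneg hw_int hgw_int)
    (fun ψ => hsol.integral_averageRate_mul_add_eq_zero hγ hp hT.le hu hu_nonneg hw hw_compact)
    t ht

end IsWeakSolutionMemory

/-- Compactly supported `C²` functions `wn n` that converge pointwise to `w`, together with their
images under `Δ_G`, both dominated by the integrable function `b`. -/
structure IsDominatedApprox (wn : ℕ → Euc N × Euc k → ℝ) (w b : Euc N × Euc k → ℝ) : Prop where
  contDiff : ∀ n, ContDiff ℝ 2 (wn n)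
  hasCompactSupport : ∀ n, HasCompactSupport (wn n)
  integrable_bound : Integrable b
  norm_le : ∀ n z, ‖wn n z‖ ≤ b z
  norm_grushin_le : ∀ n z, ‖grushin (wn n) z‖ ≤ b z
  tendsto : ∀ z, Tendsto (fun n => wn n z) atTop (nhds (w z))
  tendsto_grushin : ∀ z, Tendsto (fun n => grushin (wn n) z) atTop (nhds (grushin w z))

lemma integrable_of_tendsto_of_norm_le {E : Type*} [MeasurableSpace E] {μ : Measure E}
    {fn : ℕ → E → ℝ} {f b : E → ℝ} (hfn : ∀ n, AEStronglyMeasurable (fn n) μ)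
    (hb : Integrable b μ) (hfb : ∀ n z, ‖fn n z‖ ≤ b z)
    (hlim : ∀ z, Tendsto (fun n => fn n z) atTop (nhds (f z))) : Integrable f μ :=
  hb.mono' (aestronglyMeasurable_of_tendsto_ae atTop hfn (.of_forall hlim))
    (.of_forall fun z => le_of_tendsto (hlim z).norm (.of_forall fun n => hfb n z))

namespace IsDominatedApprox

variable {wn : ℕ → Euc N × Euc k → ℝ} {b : Euc N × Euc k → ℝ}

lemma aestronglyMeasurable (h : IsDominatedApprox wn w b) (n : ℕ) :
    AEStronglyMeasurable (wn n) :=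
  (h.contDiff n).continuous.aestronglyMeasurable

lemma aestronglyMeasurable_grushin (h : IsDominatedApprox wn w b) (n : ℕ) :
    AEStronglyMeasurable (grushin (wn n)) :=
  (continuous_grushin (h.contDiff n)).aestronglyMeasurable

lemma integrable (h : IsDominatedApprox wn w b) : Integrable w :=
  integrable_of_tendsto_of_norm_le h.aestronglyMeasurable h.integrable_bound h.norm_le h.tendsto

lemma integrable_grushin (h : IsDominatedApprox wn w b) : Integrable (grushin w) :=
  integrable_of_tendsto_of_norm_le h.aestronglyMeasurable_grushin h.integrable_bound
    h.norm_grushin_le h.tendsto_grushin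

lemma integrable_apply (h : IsDominatedApprox wn w b) (n : ℕ) : Integrable (wn n) :=
  h.integrable_bound.mono' (h.aestronglyMeasurable n) (.of_forall (h.norm_le n))

lemma integrable_grushin_apply (h : IsDominatedApprox wn w b) (n : ℕ) :
    Integrable (grushin (wn n)) :=
  h.integrable_bound.mono' (h.aestronglyMeasurable_grushin n) (.of_forall (h.norm_grushin_le n))

lemma tendsto_averageRate (h : IsDominatedApprox wn w b) (hγ : γ < 1) (hp : 0 ≤ p)
    (hu : IsBoundedContinuousOn u (Set.Icc 0 T)) (hu_nonneg : ∀ z, ∀ t ∈ Set.Icc 0 T, 0 ≤ u z t)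
    {t : ℝ} (ht : t ∈ Set.Icc 0 T) :
    Tendsto (fun n => averageRate γ p u (wn n) t) atTop (nhds (averageRate γ p u w t)) := by
  have hup := (hu.rpow hu_nonneg hp).mono (Set.Icc_subset_Icc_right ht.2)
  obtain ⟨B, hB⟩ := hup.exists_norm_integral_mul_le h.integrable_bound
  refine (tendsto_memoryIntegral hγ (fun n => hup.continuousOn_integral_mul (h.integrable_apply n))
    (fun n s hs => hB s hs (wn n) (h.norm_le n)) fun s hs => ?_).add ?_
  · exact hup.tendsto_integral_mul hs h.aestronglyMeasurable h.integrable_bound h.norm_le h.tendsto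
  · exact hu.tendsto_integral_mul ht h.aestronglyMeasurable_grushin h.integrable_bound
      h.norm_grushin_le h.tendsto_grushin

lemma exists_norm_averageRate_le (h : IsDominatedApprox wn w b) (hγ : γ < 1) (hp : 0 ≤ p)
    (hu : IsBoundedContinuousOn u (Set.Icc 0 T)) (hu_nonneg : ∀ z, ∀ t ∈ Set.Icc 0 T, 0 ≤ u z t) :
    ∃ B, ∀ n, ∀ t ∈ Set.Icc 0 T, ‖averageRate γ p u (wn n) t‖ ≤ B := by
  obtain ⟨B₁, hB₁⟩ := (hu.rpow hu_nonneg hp).exists_norm_integral_mul_le h.integrable_bound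
  obtain ⟨B₂, hB₂⟩ := hu.exists_norm_integral_mul_le h.integrable_bound
  obtain ⟨C, hC⟩ := isCompact_Icc.exists_bound_of_continuousOn
    (continuousOn_memoryIntegral hγ (h := fun _ => B₁) (T := T) continuousOn_const)
  refine ⟨C + B₂, fun n t ht => (norm_add_le _ _).trans (add_le_add ?_ ?_)⟩
  · refine (norm_memoryIntegral_le hγ fun s hs => ?_).trans ((le_abs_self _).trans (hC t ht))
    exact hB₁ s ⟨hs.1, hs.2.trans ht.2⟩ (wn n) (h.norm_le n)
  · exact hB₂ t ht _ (h.norm_grushin_le n)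

lemma integral_mul_eq_add_integral_averageRate (h : IsDominatedApprox wn w b)
    (hsol : IsWeakSolutionMemory N k γ p T u0 u) (hγ : γ < 1) (hp : 0 < p) (hT : 0 < T)
    (hu : IsBoundedContinuousOn u (Set.Icc 0 T)) (hu_nonneg : ∀ z, ∀ t ∈ Set.Icc 0 T, 0 ≤ u z t)
    {t : ℝ} (ht : t ∈ Set.Icc 0 T) :
    ∫ z, u z t * w z = (∫ z, u z 0 * w z) + ∫ s in 0..t, averageRate γ p u w s := by
  have hlim {s : ℝ} (hs : s ∈ Set.Icc 0 T) :
      Tendsto (fun n => ∫ z, u z s * wn n z) atTop (nhds (∫ z, u z s * w z)) :=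
    hu.tendsto_integral_mul hs h.aestronglyMeasurable h.integrable_bound h.norm_le h.tendsto
  have hsub : Set.uIoc 0 t ⊆ Set.Icc 0 T := by
    rw [Set.uIoc_of_le ht.1]
    exact Set.Ioc_subset_Icc_self.trans (Set.Icc_subset_Icc_right ht.2)
  obtain ⟨B, hB⟩ := h.exists_norm_averageRate_le hγ hp.le hu hu_nonneg
  have hrate_lim : Tendsto (fun n => ∫ s in 0..t, averageRate γ p u (wn n) s) atTop
      (nhds (∫ s in 0..t, averageRate γ p u w s)) := by
    refine intervalIntegral.tendsto_integral_filter_of_dominated_convergence (fun _ => B)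
      (.of_forall fun n => ?_) (.of_forall fun n => .of_forall fun s hs => hB n s (hsub hs))
      intervalIntegrable_const
      (.of_forall fun s hs => h.tendsto_averageRate hγ hp.le hu hu_nonneg (hsub hs))
    exact ((continuousOn_averageRate hγ hp.le hu hu_nonneg (h.integrable_apply n)
      (h.integrable_grushin_apply n)).mono hsub).aestronglyMeasurable measurableSet_uIoc
  refine tendsto_nhds_unique (hlim ht)
    (((hlim (Set.left_mem_Icc.2 hT.le)).add hrate_lim).congr fun n => ?_)
  exact (hsol.integral_mul_eq_add_integral_averageRate hγ hp hT hu hu_nonneg (h.contDiff n)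
    (h.hasCompactSupport n) ht).symm

end IsDominatedApprox

end WeakSolution

section Truncation

variable {g χ : ℝ → ℝ}

/-- The product of `g` with the dilated cutoff `χ(a ·)`, which recovers `g` as `a → 0` when
`χ 0 = 1`. -/
def truncate (χ g : ℝ → ℝ) (a r : ℝ) : ℝ :=
  g r * χ (a * r)

lemma contDiff_truncate (hχ : ContDiff ℝ 2 χ) (hg : ContDiff ℝ 2 g) (a : ℝ) :
    ContDiff ℝ 2 (truncate χ g a) :=
  hg.mul (hχ.comp (contDiff_const.mul contDiff_id))

lemma deriv_truncate (hχ : Differentiable ℝ χ) (hg : Differentiable ℝ g) (a : ℝ) :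
    deriv (truncate χ g a) = truncate χ (deriv g) a + a • truncate (deriv χ) g a := by
  funext r
  have hdilate : HasDerivAt (fun r => χ (a * r)) (deriv χ (a * r) * (a * 1)) r :=
    (hχ (a * r)).hasDerivAt.comp r ((hasDerivAt_id r).const_mul a)
  refine ((hg r).hasDerivAt.mul hdilate).deriv.trans ?_
  simp only [truncate, Pi.add_apply, Pi.smul_apply, smul_eq_mul]
  ring

lemma differentiable_truncate (hχ : Differentiable ℝ χ) (hg : Differentiable ℝ g) (a : ℝ) :
    Differentiable ℝ (truncate χ g a) :=
  hg.mul (hχ.comp (differentiable_id.const_mul a))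

lemma deriv_deriv_truncate (hχ : ContDiff ℝ 2 χ) (hg : ContDiff ℝ 2 g) (a : ℝ) :
    deriv (deriv (truncate χ g a)) =
      truncate χ (deriv (deriv g)) a + (2 * a) • truncate (deriv χ) (deriv g) a +
        a ^ 2 • truncate (deriv (deriv χ)) g a := by
  have hχ₀ := hχ.differentiable two_ne_zero
  have hg₀ := hg.differentiable two_ne_zero
  have hχ₁ := (contDiff_succ_iff_deriv (n := 1).1 hχ).2.2.differentiable one_ne_zero
  have hg₁ := (contDiff_succ_iff_deriv (n := 1).1 hg).2.2.differentiable one_ne_zero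
  funext r
  have hχg' := (differentiable_truncate hχ₀ hg₁ a r).hasDerivAt
  have hχ'g := ((differentiable_truncate hχ₁ hg₀ a r).hasDerivAt).const_smul a
  rw [deriv_truncate hχ₀ hg₀, (hχg'.add hχ'g).deriv, deriv_truncate hχ₀ hg₁, deriv_truncate hχ₁ hg₀]
  simp only [Pi.add_apply, Pi.smul_apply, smul_eq_mul]
  ring

lemma tendsto_truncate (hχ : Continuous χ) (g : ℝ → ℝ) (r : ℝ) :
    Tendsto (fun a => truncate χ g a r) (nhds 0) (nhds (g r * χ 0)) := by
  have hcont : Continuous fun a => truncate χ g a r := by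
    unfold truncate
    fun_prop
  simpa only [truncate, zero_mul] using hcont.tendsto 0

lemma tendsto_deriv_truncate (hχ : ContDiff ℝ 1 χ) (hg : Differentiable ℝ g) (r : ℝ) :
    Tendsto (fun a => deriv (truncate χ g a) r) (nhds 0) (nhds (deriv g r * χ 0)) := by
  have hχ' : Continuous (deriv χ) := hχ.continuous_deriv le_rfl
  simp only [deriv_truncate (hχ.differentiable one_ne_zero) hg, Pi.add_apply, Pi.smul_apply,
    smul_eq_mul]
  simpa using (tendsto_truncate hχ.continuous (deriv g) r).add
    (tendsto_id.mul (tendsto_truncate hχ' g r))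

lemma tendsto_deriv_deriv_truncate (hχ : ContDiff ℝ 2 χ) (hg : ContDiff ℝ 2 g) (r : ℝ) :
    Tendsto (fun a => deriv (deriv (truncate χ g a)) r) (nhds 0)
      (nhds (deriv (deriv g) r * χ 0)) := by
  have hχ' : ContDiff ℝ 1 (deriv χ) := (contDiff_succ_iff_deriv (n := 1).1 hχ).2.2
  simp only [deriv_deriv_truncate hχ hg, Pi.add_apply, Pi.smul_apply, smul_eq_mul]
  have ha : Tendsto (fun a : ℝ => 2 * a) (nhds 0) (nhds 0) :=
    (continuous_const_mul (2 : ℝ)).tendsto' 0 0 (mul_zero 2)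
  have ha2 : Tendsto (fun a : ℝ => a ^ 2) (nhds 0) (nhds 0) :=
    (continuous_pow 2).tendsto' 0 0 (zero_pow two_ne_zero)
  simpa using ((tendsto_truncate hχ.continuous (deriv (deriv g)) r).add
    (ha.mul (tendsto_truncate hχ'.continuous (deriv g) r))).add
    (ha2.mul (tendsto_truncate (hχ'.continuous_deriv le_rfl) g r))

lemma abs_truncate_le {K B a r : ℝ} (hχ : ∀ s, |χ s| ≤ K) (hg : |g r| ≤ B) :
    |truncate χ g a r| ≤ B * K := by
  rw [truncate, abs_mul]
  exact mul_le_mul hg (hχ _) (abs_nonneg _) ((abs_nonneg _).trans hg)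

lemma abs_deriv_truncate_le (hχ : Differentiable ℝ χ) (hg : Differentiable ℝ g) {K B a r : ℝ}
    (hχ₀ : ∀ s, |χ s| ≤ K) (hχ₁ : ∀ s, |deriv χ s| ≤ K) (ha : |a| ≤ 1) (hg₀ : |g r| ≤ B)
    (hg₁ : |deriv g r| ≤ B) :
    |deriv (truncate χ g a) r| ≤ 2 * (B * K) := by
  rw [deriv_truncate hχ hg, Pi.add_apply, Pi.smul_apply, smul_eq_mul]
  calc _ ≤ |truncate χ (deriv g) a r| + |a| * |truncate (deriv χ) g a r| := by
        rw [← abs_mul]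
        exact abs_add_le _ _
    _ ≤ B * K + 1 * (B * K) := by
        gcongr
        · exact abs_truncate_le hχ₀ hg₁
        · exact abs_truncate_le hχ₁ hg₀
    _ = _ := by ring

lemma abs_deriv_deriv_truncate_le (hχ : ContDiff ℝ 2 χ) (hg : ContDiff ℝ 2 g) {K B a r : ℝ}
    (hχ₀ : ∀ s, |χ s| ≤ K) (hχ₁ : ∀ s, |deriv χ s| ≤ K) (hχ₂ : ∀ s, |deriv (deriv χ) s| ≤ K)
    (ha : |a| ≤ 1) (hg₀ : |g r| ≤ B) (hg₁ : |deriv g r| ≤ B) (hg₂ : |deriv (deriv g) r| ≤ B) :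
    |deriv (deriv (truncate χ g a)) r| ≤ 4 * (B * K) := by
  rw [deriv_deriv_truncate hχ hg]
  simp only [Pi.add_apply, Pi.smul_apply, smul_eq_mul]
  calc _ ≤ |truncate χ (deriv (deriv g)) a r| + 2 * |a| * |truncate (deriv χ) (deriv g) a r| +
          |a| ^ 2 * |truncate (deriv (deriv χ)) g a r| := by
        rw [← abs_two, ← abs_mul, ← abs_mul, ← abs_pow, ← abs_mul, abs_two]
        exact abs_add_three _ _ _
    _ ≤ B * K + 2 * 1 * (B * K) + 1 ^ 2 * (B * K) := by
        gcongr
        · exact abs_truncate_le hχ₀ hg₂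
        · exact abs_truncate_le hχ₁ hg₁
        · exact abs_truncate_le hχ₂ hg₀
    _ = _ := by ring

lemma exists_abs_deriv_le_of_hasCompactSupport (hχ : ContDiff ℝ 2 χ)
    (hχ_compact : HasCompactSupport χ) :
    ∃ K, (∀ s, |χ s| ≤ K) ∧ (∀ s, |deriv χ s| ≤ K) ∧ ∀ s, |deriv (deriv χ) s| ≤ K := by
  have hχ' : ContDiff ℝ 1 (deriv χ) := (contDiff_succ_iff_deriv (n := 1).1 hχ).2.2
  obtain ⟨K₀, hK₀⟩ := hχ.continuous.bounded_above_of_compact_support hχ_compact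
  obtain ⟨K₁, hK₁⟩ := hχ'.continuous.bounded_above_of_compact_support hχ_compact.deriv
  obtain ⟨K₂, hK₂⟩ := (hχ'.continuous_deriv le_rfl).bounded_above_of_compact_support
    hχ_compact.deriv.deriv
  exact ⟨max K₀ (max K₁ K₂), fun s => (hK₀ s).trans (le_max_left _ _),
    fun s => (hK₁ s).trans ((le_max_left _ _).trans (le_max_right _ _)),
    fun s => (hK₂ s).trans ((le_max_right _ _).trans (le_max_right _ _))⟩

end Truncation

section RadialWeight

variable {N k : ℕ} {g χ : ℝ → ℝ}

lemma hasCompactSupport_truncate_grushinGauge (hχ : HasCompactSupport χ) {a : ℝ} (ha : a ≠ 0) :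
    HasCompactSupport fun z : Euc N × Euc k => truncate χ g a (grushinGauge z) := by
  obtain ⟨R, hR⟩ := hχ.isCompact.isBounded.exists_norm_le
  refine .intro (isCompact_closedBall 0 (R / |a|)) fun z hz => ?_
  suffices hout : a * grushinGauge z ∉ tsupport χ by
    rw [truncate, image_eq_zero_of_notMem_tsupport hout, mul_zero]
  intro hmem
  refine hz (mem_closedBall_zero_iff.2 ((norm_le_grushinGauge z).trans ?_))
  rw [le_div_iff₀' (abs_pos.2 ha)]
  simpa only [norm_mul, Real.norm_eq_abs, abs_of_pos (grushinGauge_pos z)] using hR _ hmem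

lemma tendsto_grushin_truncate_grushinGauge (hχ : ContDiff ℝ 2 χ) (hχ_zero : χ 0 = 1)
    (hg : ContDiff ℝ 2 g) (z : Euc N × Euc k) :
    Tendsto (fun a => grushin (fun w => truncate χ g a (grushinGauge w)) z) (nhds 0)
      (nhds (grushin (fun w => g (grushinGauge w)) z)) := by
  simp only [grushin_comp hg contDiff_grushinGauge,
    grushin_comp (contDiff_truncate hχ hg _) contDiff_grushinGauge]
  have h₁ := tendsto_deriv_truncate (hχ.of_le one_le_two) (hg.differentiable two_ne_zero)
    (grushinGauge z)
  have h₂ := tendsto_deriv_deriv_truncate hχ hg (grushinGauge z)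
  rw [hχ_zero, mul_one] at h₁ h₂
  exact (h₂.mul_const _).add (h₁.mul_const _)

lemma isDominatedApprox_truncate_grushinGauge (hχ : ContDiff ℝ 2 χ)
    (hχ_compact : HasCompactSupport χ) (hχ_zero : χ 0 = 1) {K : ℝ} (hK₀ : ∀ s, |χ s| ≤ K)
    (hK₁ : ∀ s, |deriv χ s| ≤ K) (hK₂ : ∀ s, |deriv (deriv χ) s| ≤ K) {a : ℕ → ℝ}
    (ha_ne : ∀ n, a n ≠ 0) (ha_le : ∀ n, |a n| ≤ 1) (ha_lim : Tendsto a atTop (nhds 0))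
    (hg : ContDiff ℝ 2 g) {B : ℝ → ℝ} (hg₀ : ∀ r, |g r| ≤ B r) (hg₁ : ∀ r, |deriv g r| ≤ B r)
    (hg₂ : ∀ r, |deriv (deriv g) r| ≤ B r)
    (hB : Integrable fun z : Euc N × Euc k => B (grushinGauge z) * grushinGauge z) :
    IsDominatedApprox (fun n z => truncate χ g (a n) (grushinGauge z))
      (fun z : Euc N × Euc k => g (grushinGauge z))
      fun z => 4 * (B (grushinGauge z) * K) *
        ((4 + (2 * ((N : ℝ) + 2) + k)) * grushinGauge z) := by
  have hBK (r : ℝ) : 0 ≤ B r * K :=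
    mul_nonneg ((abs_nonneg _).trans (hg₀ r)) ((abs_nonneg _).trans (hK₀ 0))
  constructor
  case contDiff => exact fun n => (contDiff_truncate hχ hg _).comp contDiff_grushinGauge
  case hasCompactSupport =>
    exact fun n => hasCompactSupport_truncate_grushinGauge hχ_compact (ha_ne n)
  case integrable_bound =>
    convert hB.const_mul (4 * K * (4 + (2 * ((N : ℝ) + 2) + k))) using 2
    ring
  case norm_le =>
    intro n z
    have hQ : (1 : ℝ) ≤ 4 + (2 * ((N : ℝ) + 2) + k) := by
      linarith [Nat.cast_nonneg (α := ℝ) N, Nat.cast_nonneg (α := ℝ) k]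
    refine (abs_truncate_le hK₀ (hg₀ _)).trans ?_
    nlinarith [hBK (grushinGauge z), one_le_mul_of_one_le_of_one_le hQ (one_le_grushinGauge z)]
  case norm_grushin_le =>
    intro n z
    refine abs_grushin_comp_grushinGauge_le (contDiff_truncate hχ hg _) ?_
      (abs_deriv_deriv_truncate_le hχ hg hK₀ hK₁ hK₂ (ha_le n) (hg₀ _) (hg₁ _) (hg₂ _))
    refine (abs_deriv_truncate_le (hχ.differentiable two_ne_zero) (hg.differentiable two_ne_zero)
      hK₀ hK₁ (ha_le n) (hg₀ _) (hg₁ _)).trans ?_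
    linarith [hBK (grushinGauge z)]
  case tendsto =>
    intro z
    have hlim := tendsto_truncate hχ.continuous g (grushinGauge z)
    rw [hχ_zero, mul_one] at hlim
    exact hlim.comp ha_lim
  case tendsto_grushin =>
    exact fun z => (tendsto_grushin_truncate_grushinGauge hχ hχ_zero hg z).comp ha_lim

lemma exists_isDominatedApprox_comp_grushinGauge (hg : ContDiff ℝ 2 g) {B : ℝ → ℝ}
    (hg₀ : ∀ r, |g r| ≤ B r) (hg₁ : ∀ r, |deriv g r| ≤ B r) (hg₂ : ∀ r, |deriv (deriv g) r| ≤ B r)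
    (hB : Integrable fun z : Euc N × Euc k => B (grushinGauge z) * grushinGauge z) :
    ∃ wn b, IsDominatedApprox wn (fun z : Euc N × Euc k => g (grushinGauge z)) b := by
  let χ : ContDiffBump (0 : ℝ) := ⟨1, 2, one_pos, one_lt_two⟩
  have hχ : ContDiff ℝ 2 χ := χ.contDiff
  obtain ⟨K, hK₀, hK₁, hK₂⟩ := exists_abs_deriv_le_of_hasCompactSupport hχ χ.hasCompactSupport
  have ha_pos (n : ℕ) : 0 < 1 / ((n : ℝ) + 1) := Nat.one_div_pos_of_nat
  have ha_le (n : ℕ) : |1 / ((n : ℝ) + 1)| ≤ 1 := by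
    rw [abs_of_pos (ha_pos n), div_le_one (by positivity)]
    exact le_add_of_nonneg_left n.cast_nonneg
  exact ⟨_, _, isDominatedApprox_truncate_grushinGauge hχ χ.hasCompactSupport
    χ.eventuallyEq_one.eq_of_nhds hK₀ hK₁ hK₂ (fun n => (ha_pos n).ne') ha_le
    tendsto_one_div_add_atTop_nhds_zero_nat hg hg₀ hg₁ hg₂ hB⟩

end RadialWeight

section ExponentialWeight

variable {N k : ℕ} {ε : ℝ}

lemma one_add_pow_mul_exp_neg_mul_le (hε : 0 < ε) (n : ℕ) {r : ℝ} (hr : 0 ≤ r) :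
    (1 + r) ^ n * exp (-ε * r) ≤ n.factorial / ε ^ n * exp ε := by
  have htaylor := Real.pow_div_factorial_le_exp (ε * (1 + r)) (by positivity) n
  rw [div_le_iff₀ (by positivity), mul_pow] at htaylor
  rw [div_mul_eq_mul_div, le_div_iff₀ (by positivity)]
  calc (1 + r) ^ n * exp (-ε * r) * ε ^ n = ε ^ n * (1 + r) ^ n * exp (-ε * r) := by ring
    _ ≤ exp (ε * (1 + r)) * n.factorial * exp (-ε * r) := by gcongr
    _ = n.factorial * (exp (ε * (1 + r)) * exp (-ε * r)) := by ring
    _ = n.factorial * exp ε := by rw [← Real.exp_add]; ring_nf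

lemma integrable_exp_neg_mul_mul_of_norm_le {E : Type*} [NormedAddCommGroup E] [NormedSpace ℝ E]
    [FiniteDimensional ℝ E] [MeasurableSpace E] [BorelSpace E] {μ : Measure E}
    [μ.IsAddHaarMeasure] {ρ : E → ℝ} (hρ_cont : Continuous ρ) (hρ : ∀ z, ‖z‖ ≤ ρ z)
    (hε : 0 < ε) : Integrable (fun z => exp (-ε * ρ z) * ρ z) μ := by
  set n := Module.finrank ℝ E + 1
  have hint : Integrable (fun z : E => (1 + ‖z‖) ^ (-(n : ℝ))) μ :=
    integrable_one_add_norm (by exact_mod_cast Nat.lt_succ_self _)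
  refine (hint.const_mul ((n + 1).factorial / ε ^ (n + 1) * exp ε)).mono'
    (by fun_prop) (.of_forall fun z => ?_)
  have hρ_nonneg : 0 ≤ ρ z := (norm_nonneg z).trans (hρ z)
  rw [Real.norm_of_nonneg (by positivity), Real.rpow_neg (by positivity), Real.rpow_natCast,
    ← div_eq_mul_inv, le_div_iff₀ (by positivity)]
  calc exp (-ε * ρ z) * ρ z * (1 + ‖z‖) ^ n
      ≤ exp (-ε * ρ z) * (1 + ρ z) * (1 + ρ z) ^ n := by
        gcongr
        · exact le_add_of_nonneg_left zero_le_one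
        · exact hρ z
    _ = (1 + ρ z) ^ (n + 1) * exp (-ε * ρ z) := by ring
    _ ≤ _ := one_add_pow_mul_exp_neg_mul_le hε (n + 1) hρ_nonneg

lemma integrable_exp_neg_mul_grushinGauge_mul (hε : 0 < ε) :
    Integrable fun z : Euc N × Euc k => exp (-ε * grushinGauge z) * grushinGauge z := by
  have : (volume : Measure (Euc N × Euc k)).IsAddHaarMeasure :=
    inferInstanceAs ((volume : Measure (Euc N)).prod (volume : Measure (Euc k))).IsAddHaarMeasure
  exact integrable_exp_neg_mul_mul_of_norm_le continuous_grushinGauge norm_le_grushinGauge hε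

lemma deriv_const_mul_exp_mul (c a : ℝ) :
    deriv (fun r => c * exp (a * r)) = fun r => c * a * exp (a * r) := by
  funext r
  have hexp := (((hasDerivAt_id r).const_mul a).exp.const_mul c).deriv
  refine hexp.trans ?_
  simp only [id, mul_one]
  ring

lemma exists_isDominatedApprox_const_mul_exp_grushinGauge (hε : 0 < ε) (c : ℝ) :
    ∃ wn b, IsDominatedApprox wn
      (fun z : Euc N × Euc k => c * exp (-ε * grushinGauge z)) b := by
  refine exists_isDominatedApprox_comp_grushinGauge (g := fun r => c * exp (-ε * r))
    (B := fun r => |c| * (1 + ε ^ 2) * exp (-ε * r)) (by fun_prop) (fun r => ?_) (fun r => ?_)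
    (fun r => ?_) ?_
  · rw [abs_mul, Real.abs_exp]
    gcongr
    exact le_mul_of_one_le_right (abs_nonneg c) (by linarith [sq_nonneg ε])
  · rw [deriv_const_mul_exp_mul, abs_mul, abs_mul, Real.abs_exp, abs_neg, abs_of_pos hε]
    gcongr
    nlinarith [sq_nonneg (ε - 1)]
  · rw [deriv_const_mul_exp_mul, deriv_const_mul_exp_mul, mul_assoc c, neg_mul_neg, ← sq, abs_mul,
      abs_mul, Real.abs_exp, abs_of_nonneg (sq_nonneg ε)]
    gcongr
    exact le_add_of_nonneg_left zero_le_one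
  · simp only [mul_assoc _ (exp _)]
    exact (integrable_exp_neg_mul_grushinGauge_mul hε).const_mul _

lemma neg_mul_le_grushin_const_mul_exp_grushinGauge (hε : 0 ≤ ε) {c : ℝ} (hc : 0 ≤ c)
    (z : Euc N × Euc k) :
    -(ε * (2 * ((N : ℝ) + 2) + k)) * (c * exp (-ε * grushinGauge z)) ≤
      grushin (fun w : Euc N × Euc k => c * exp (-ε * grushinGauge w)) z := by
  rw [grushin_comp (g := fun r => c * exp (-ε * r)) (by fun_prop) contDiff_grushinGauge,
    deriv_const_mul_exp_mul, deriv_const_mul_exp_mul]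
  have hweight : 0 ≤ c * exp (-ε * grushinGauge z) := by positivity
  have hgrad : 0 ≤ c * exp (-ε * grushinGauge z) *
      (ε ^ 2 * grushinGradSq (grushinGauge : Euc N × Euc k → ℝ) z) :=
    mul_nonneg hweight (mul_nonneg (sq_nonneg ε) (grushinGradSq_nonneg _ z))
  have hlap := mul_le_mul_of_nonneg_left (grushin_grushinGauge_le z) (mul_nonneg hweight hε)
  linarith

end ExponentialWeight

section WeightedAverage

variable {N k : ℕ} {γ p T ε c : ℝ} {u0 w b : Euc N × Euc k → ℝ} {wn : ℕ → Euc N × Euc k → ℝ}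
  {u : Euc N × Euc k → ℝ → ℝ}

lemma isBoundedContinuousOn_of_zeroAtInfty {X : Type*} [TopologicalSpace X] {S : Set ℝ}
    (hS : IsCompact S) {v : X → ℝ → ℝ} {V : ℝ → ZeroAtInftyContinuousMap X ℝ}
    (hV : ContinuousOn V S) (hVv : ∀ t ∈ S, ∀ z, V t z = v z t) :
    IsBoundedContinuousOn v S where
  continuousOn := by
    have hbcf : ContinuousOn (fun q : X × ℝ => (V q.2).toBCF) (Set.univ ×ˢ S) :=
      ZeroAtInftyContinuousMap.isometry_toBCF.continuous.comp_continuousOn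
        (hV.comp continuousOn_snd fun _ hq => hq.2)
    exact (hbcf.eval continuousOn_fst).congr fun q hq => (hVv q.2 hq.2 q.1).symm
  exists_bound := by
    obtain ⟨M, hM⟩ := hS.exists_bound_of_continuousOn hV
    refine ⟨M, fun t ht z => ?_⟩
    rw [← hVv t ht z]
    exact ((V t).toBCF.norm_coe_le_norm z).trans (hM t ht)

lemma memoryIntegral_integral_mul_rpow_le (hγ : γ < 1) (hp : 1 ≤ p)
    (hu : IsBoundedContinuousOn u (Set.Icc 0 T)) (hu_nonneg : ∀ z, ∀ t ∈ Set.Icc 0 T, 0 ≤ u z t)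
    (hw_nonneg : ∀ z, 0 ≤ w z) (hw_one : ∫ z, w z = 1) {t : ℝ} (ht : t ∈ Set.Icc 0 T) :
    memoryIntegral γ (fun s => (∫ z, u z s * w z) ^ p) t ≤
      memoryIntegral γ (fun s => ∫ z, u z s ^ p * w z) t := by
  have hw : Integrable w := .of_integral_ne_zero (hw_one ▸ one_ne_zero)
  have hsub : Set.Icc 0 t ⊆ Set.Icc 0 T := Set.Icc_subset_Icc_right ht.2
  have hp_nonneg : 0 ≤ p := zero_le_one.trans hp
  have hup := hu.rpow hu_nonneg hp_nonneg
  refine memoryIntegral_mono hγ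
    (((hu.mono hsub).continuousOn_integral_mul hw).rpow_const fun _ _ => .inr hp_nonneg)
    ((hup.mono hsub).continuousOn_integral_mul hw) fun s hs => ?_
  exact convexOn_map_integral_mul_le (convexOn_rpow hp)
    (Real.continuous_rpow_const hp_nonneg).continuousOn isClosed_Ici hw_nonneg hw_one
    (fun z => hu_nonneg z s (hsub hs)) (hu.integrable_mul (hsub hs) hw)
    (hup.integrable_mul (hsub hs) hw)

lemma memoryIntegral_rpow_le_averageRate_add (hγ : γ < 1) (hp : 1 ≤ p)
    (hu : IsBoundedContinuousOn u (Set.Icc 0 T)) (hu_nonneg : ∀ z, ∀ t ∈ Set.Icc 0 T, 0 ≤ u z t)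
    (hw_nonneg : ∀ z, 0 ≤ w z) (hw_one : ∫ z, w z = 1) (hgw : Integrable (grushin w)) {l : ℝ}
    (hl : ∀ z, -l * w z ≤ grushin w z) {t : ℝ} (ht : t ∈ Set.Icc 0 T) :
    memoryIntegral γ (fun s => (∫ z, u z s * w z) ^ p) t ≤
      averageRate γ p u w t + l * ∫ z, u z t * w z := by
  have hw : Integrable w := .of_integral_ne_zero (hw_one ▸ one_ne_zero)
  have hlap : -l * ∫ z, u z t * w z ≤ ∫ z, u z t * grushin w z := by
    rw [← integral_const_mul]
    refine integral_mono ((hu.integrable_mul ht hw).const_mul _) (hu.integrable_mul ht hgw)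
      fun z => ?_
    linarith [mul_le_mul_of_nonneg_left (hl z) (hu_nonneg z t ht)]
  have hjensen := memoryIntegral_integral_mul_rpow_le hγ hp hu hu_nonneg hw_nonneg hw_one ht
  unfold averageRate
  linarith

lemma IsDominatedApprox.contDiffOn_and_memoryIntegral_rpow_le (h : IsDominatedApprox wn w b)
    (hsol : IsWeakSolutionMemory N k γ p T u0 u) (hγ : γ < 1) (hp : 1 ≤ p) (hT : 0 < T)
    (hu : IsBoundedContinuousOn u (Set.Icc 0 T)) (hu_nonneg : ∀ z, ∀ t ∈ Set.Icc 0 T, 0 ≤ u z t)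
    (hw_nonneg : ∀ z, 0 ≤ w z) (hw_one : ∫ z, w z = 1) {l : ℝ}
    (hl : ∀ z, -l * w z ≤ grushin w z) :
    ContDiffOn ℝ 1 (fun t => ∫ z, u z t * w z) (Set.Icc 0 T) ∧
      ∀ t ∈ Set.Icc 0 T, memoryIntegral γ (fun s => (∫ z, u z s * w z) ^ p) t ≤
        derivWithin (fun t => ∫ z, u z t * w z) (Set.Icc 0 T) t + l * ∫ z, u z t * w z := by
  have hp_pos : 0 < p := one_pos.trans_le hp
  have hrate := continuousOn_averageRate hγ hp_pos.le hu hu_nonneg h.integrable h.integrable_grushin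
  have hderiv : ∀ t ∈ Set.Icc 0 T, HasDerivWithinAt (fun t => ∫ z, u z t * w z)
      (averageRate γ p u w t) (Set.Icc 0 T) t := fun t =>
    hasDerivWithinAt_of_eq_add_integral hrate fun t =>
      h.integral_mul_eq_add_integral_averageRate hsol hγ hp_pos hT hu hu_nonneg
  refine ⟨contDiffOn_one_of_hasDerivWithinAt hT hrate hderiv, fun t ht => ?_⟩
  rw [(hderiv t ht).derivWithin (uniqueDiffOn_Icc hT t ht)]
  exact memoryIntegral_rpow_le_averageRate_add hγ hp hu hu_nonneg hw_nonneg hw_one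
    h.integrable_grushin hl ht

theorem weighted_average_integro_differential_inequality_general (hγ : γ < 1) (hp : 1 ≤ p)
    (hT : 0 < T) (hε : 0 < ε) (hc : 0 ≤ c)
    (hweight : ∫ z : Euc N × Euc k, c * exp (-ε * grushinGauge z) = 1)
    (hu_nonneg : ∀ z, ∀ t ∈ Set.Icc 0 T, 0 ≤ u z t) (hu : IsBoundedContinuousOn u (Set.Icc 0 T))
    (hsol : IsWeakSolutionMemory N k γ p T u0 u) :
    ContDiffOn ℝ 1 (fun t => ∫ z, u z t * (c * exp (-ε * grushinGauge z))) (Set.Icc 0 T) ∧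
      ∀ t ∈ Set.Icc 0 T,
        ∫ s in Set.Ioc 0 t, (t - s) ^ (-γ) * (∫ z, u z s * (c * exp (-ε * grushinGauge z))) ^ p ≤
          derivWithin (fun r => ∫ z, u z r * (c * exp (-ε * grushinGauge z))) (Set.Icc 0 T) t +
            ε * (2 * ((N : ℝ) + 2) + k) * ∫ z, u z t * (c * exp (-ε * grushinGauge z)) := by
  obtain ⟨_, _, happrox⟩ :=
    exists_isDominatedApprox_const_mul_exp_grushinGauge (N := N) (k := k) hε c
  exact happrox.contDiffOn_and_memoryIntegral_rpow_le hsol hγ hp hT hu hu_nonneg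
    (fun z => by positivity) hweight (neg_mul_le_grushin_const_mul_exp_grushinGauge hε.le hc)

end WeightedAverage

/-- **Key integro-differential inequality for the weighted average.**
Let `0 ≤ γ < 1`, `p > 1`, `T > 0`, and let `Θ` be normalized so that `∫ Θ = 1`. If
`u ∈ C([0,T], C₀(ℝ^{N+k}))` is a nonnegative weak solution of the memory problem with
nonnegative datum `u0 ∈ C₀(ℝ^{N+k})`, then `f(t) = ∫ u(z,t) Θ(z) dz` is `C¹` on `[0,T]`
and satisfies `f'(t) + f(t) ≥ ∫_0^t (t−s)^{−γ} f(s)^p ds` on `[0,T]`. -/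
theorem weighted_average_integro_differential_inequality (N k : ℕ) (hN : 1 ≤ N) (hk : 1 ≤ k)
    (γ p T c : ℝ) (hγ0 : 0 ≤ γ) (hγ1 : γ < 1) (hp : 1 < p) (hT : 0 < T) (hc : 0 < c)
    (hΘnorm : (∫ z : Euc N × Euc k, Theta N k c z) = 1)
    (u0 : Euc N × Euc k → ℝ) (hu0c : Continuous u0)
    (hu0z : Tendsto u0 (cocompact (Euc N × Euc k)) (nhds 0))
    (hu0nn : ∀ z, 0 ≤ u0 z)
    (u : Euc N × Euc k → ℝ → ℝ)
    (hunn : ∀ z : Euc N × Euc k, ∀ t ∈ Set.Icc (0 : ℝ) T, 0 ≤ u z t)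
    (hU : ∃ U : ℝ → ZeroAtInftyContinuousMap (Euc N × Euc k) ℝ,
      ContinuousOn U (Set.Icc 0 T) ∧ ∀ t ∈ Set.Icc (0 : ℝ) T, ∀ z, U t z = u z t)
    (hsol : IsWeakSolutionMemory N k γ p T u0 u) :
    ContDiffOn ℝ 1 (fun t => ∫ z : Euc N × Euc k, u z t * Theta N k c z) (Set.Icc 0 T) ∧
    ∀ t ∈ Set.Icc (0 : ℝ) T,
      (∫ s in Set.Ioc (0 : ℝ) t,
          (t - s) ^ (-γ) * (∫ z : Euc N × Euc k, u z s * Theta N k c z) ^ p) ≤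
        derivWithin (fun r => ∫ z : Euc N × Euc k, u z r * Theta N k c z) (Set.Icc 0 T) t +
          (∫ z : Euc N × Euc k, u z t * Theta N k c z) := by
  obtain ⟨U, hU_cont, hUu⟩ := hU
  have hrate : 1 / (2 * ((N : ℝ) + 2) + k) * (2 * ((N : ℝ) + 2) + k) = 1 :=
    one_div_mul_cancel (by positivity)
  simpa only [Theta, grushinGauge, hrate, one_mul] using
    weighted_average_integro_differential_inequality_general hγ1 hp.le hT (by positivity) hc.le
      hΘnorm hunn (isBoundedContinuousOn_of_zeroAtInfty isCompact_Icc hU_cont hUu) hsol
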